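/- arXiv:2401.05640 — 5 statements merged into one kernel-verified Lean document; each statement's English description precedes it below -/
import Mathlib

section
/- Let G be an antipodal distance-regular graph of diameter 3 and let q ≠ 0 be a real number such that the q-distance matrix 𝔻_q has exactly 2 distinct eigenvalues. Then either q = −1/2 and the intersection array of G is one of {9, 4, 1; 1, 4, 9}, {15, 8, 1; 1, 8, 15}, {27, 16, 1; 1, 16, 27}, or q = −1/3 and the intersection array of G is {35, 18, 1; 1, 18, 35}. -/
open Matrix

variable {V : Type*} [Fintype V] [DecidableEq V]

/-- The distance-`i` matrix of a graph: the `(x,y)` entry is 1 if `dist x y = i`, else 0. -/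
noncomputable def distM (G : SimpleGraph V) (i : ℕ) : Matrix V V ℝ :=
  Matrix.of fun x y => if G.dist x y = i then (1 : ℝ) else 0

/-- The `q`-distance matrix `𝔻_q = ∑_{i=1}^D (1 + 1/q + ⋯ + 1/q^{i-1}) • A_i`. -/
noncomputable def qDist (G : SimpleGraph V) (D : ℕ) (q : ℝ) : Matrix V V ℝ :=
  ∑ i ∈ Finset.Icc 1 D, (∑ j ∈ Finset.range i, (1 / q) ^ j) • distM G i

/-- `G` is distance-regular with diameter `D` and intersection numbers `b i`, `c i`
(with `c 1 = 1`): for any vertices `x, y` at distance `i ≤ D`, the number of neighbors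
of `y` at distance `i - 1` from `x` is `c i` and the number of neighbors of `y` at
distance `i + 1` from `x` is `b i`. -/
def IsDRG (G : SimpleGraph V) (D : ℕ) (b c : ℕ → ℕ) : Prop :=
  G.Connected ∧
  (∀ x y : V, G.dist x y ≤ D) ∧
  (∃ x y : V, G.dist x y = D) ∧
  c 1 = 1 ∧
  ∀ i ≤ D, ∀ x y : V, G.dist x y = i →
    ({z : V | G.Adj y z ∧ G.dist x z = i - 1} : Set V).ncard = c i ∧
    ({z : V | G.Adj y z ∧ G.dist x z = i + 1} : Set V).ncard = b i

/-- `a i = k - b i - c i` as a real number, where `k = b 0`. -/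
noncomputable def aInt (b c : ℕ → ℕ) (i : ℕ) : ℝ := (b 0 : ℝ) - (b i : ℝ) - (c i : ℝ)

/-- `G` is antipodal with diameter `D`: being equal or at distance `D` is an equivalence
relation on the vertices. -/
def IsAntipodal (G : SimpleGraph V) (D : ℕ) : Prop :=
  ∀ u v w : V, G.dist u v = D → G.dist u w = D → (v = w ∨ G.dist v w = D)

/-- `G` is an antipodal `r`-cover with diameter `D`: every antipodal class has exactly `r`
elements. -/
def IsAntipodalCover (G : SimpleGraph V) (D r : ℕ) : Prop :=
  IsAntipodal G D ∧ ∀ x : V, ({y : V | y = x ∨ G.dist x y = D} : Set V).ncard = r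

set_option linter.all false
set_option linter.unusedSectionVars false
set_option linter.unusedVariables false
set_option linter.unusedSimpArgs false
set_option linter.deprecated false

theorem cnt_eq (G : SimpleGraph V) (hc : G.Connected) (x y : V) (i : ℕ) :
    (distM G i * distM G 1) x y = (({z : V | G.Adj y z ∧ G.dist x z = i} : Set V).ncard : ℝ) := by
  classical
  rw [Matrix.mul_apply, Set.ncard_eq_toFinset_card']
  rw [Finset.card_eq_sum_ones, Nat.cast_sum]
  simp only [distM, Matrix.of_apply, Set.toFinset_setOf, Finset.sum_filter]
  refine Finset.sum_congr rfl fun z _ => ?_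
  have h1 : G.dist z y = 1 ↔ G.Adj y z := by
    rw [SimpleGraph.dist_eq_one_iff_adj, SimpleGraph.adj_comm]
  by_cases ha : G.Adj y z <;> by_cases hb : G.dist x z = i <;> simp [h1, ha, hb]

/-- the facts extracted from the graph -/
theorem basic_facts (G : SimpleGraph V) (b c : ℕ → ℕ) (hG : IsDRG G 3 b c)
    (hant : IsAntipodal G 3) :
    b 2 = 1 ∧ c 3 = b 0 ∧ 1 ≤ c 2 ∧ 1 ≤ b 1 ∧ b 1 + 1 ≤ b 0 ∧
    (∀ x y, (distM G 1 * distM G 1) x y =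
      if G.dist x y = 0 then (b 0 : ℝ) else if G.dist x y = 1 then (b 0 - 1 - b 1 : ℝ) else
        if G.dist x y = 2 then (c 2 : ℝ) else 0) ∧
    (∀ x y, (distM G 3 * distM G 1) x y = if G.dist x y = 2 then 1 else 0) ∧
    (∀ y, (∑ z, distM G 1 y z : ℝ) = b 0) ∧
    (∀ x y, G.Adj x y → (({z : V | G.Adj y z ∧ G.dist x z = 1} : Set V).ncard + b 1 + 1 = b 0)) := by
  classical
  obtain ⟨hc, hle, ⟨u, v, huv⟩, hc1, h⟩ := hG
  have tri : ∀ x y z, G.dist x z ≤ G.dist x y + G.dist y z := fun x y z => hc.dist_triangle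
  have adj1 : ∀ {x y}, G.Adj x y → G.dist x y = 1 := fun h => SimpleGraph.dist_eq_one_iff_adj.mpr h
  have hdeg : ∀ y, ({z : V | G.Adj y z} : Set V).ncard = b 0 := by
    intro y
    have := (h 0 (by omega) y y (by simp)).2
    rw [← this]; congr 1; ext z; simp
  have split : ∀ x y (i : ℕ), G.dist x y = i →
      ∀ z, G.Adj y z → G.dist x z = i - 1 ∨ G.dist x z = i ∨ G.dist x z = i + 1 := by
    intro x y i hi z hz
    have h1 := tri x y z
    have h2 := tri x z y
    have h3 := adj1 hz
    have h4 := adj1 hz.symm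
    omega
  have a3 : ∀ x y, G.dist x y = 3 → ∀ z, G.Adj y z → G.dist x z ≠ 3 := by
    intro x y hxy z hz hxz
    rcases hant x y z hxy hxz with h1 | h1
    · exact G.ne_of_adj hz h1
    · rw [adj1 hz] at h1; omega
  have hc3 : c 3 = b 0 := by
    rw [← hdeg v, ← (h 3 le_rfl u v huv).1]
    congr 1; ext z; simp
    intro hz
    have h1 := split u v 3 huv z hz
    have h2 := a3 u v huv z hz
    have h3 := hle u z
    omega
  have hadjex : ∀ x y (i : ℕ), G.dist x y = i + 1 → ∃ z, G.Adj y z ∧ G.dist x z = i := by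
    intro x y i hi
    obtain ⟨p, hp⟩ := hc.exists_walk_length_eq_dist y x
    rw [SimpleGraph.dist_comm, hi] at hp
    cases p with
    | nil => simp at hp
    | cons hz p =>
      rename_i z
      refine ⟨z, hz, ?_⟩
      simp at hp
      have h1 := SimpleGraph.dist_le p
      rw [SimpleGraph.dist_comm] at h1
      have h2 := tri x z y
      rw [adj1 hz.symm] at h2
      omega
  obtain ⟨w, hvw, huw⟩ := hadjex u v 2 huv
  obtain ⟨w', hww', huw'⟩ := hadjex u w 1 huw
  have hb2 : b 2 = 1 := by
    rw [← (h 2 (by omega) u w huw).2, Set.ncard_eq_one]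
    refine ⟨v, ?_⟩
    ext z; simp
    constructor
    · rintro ⟨h1, h2⟩
      rcases hant u v z huv h2 with h3 | h3
      · exact h3.symm
      · have := tri v w z
        rw [adj1 hvw, adj1 h1] at this; omega
    · rintro rfl; exact ⟨hvw.symm, huv⟩
  have hc2 : 1 ≤ c 2 := by
    rw [← (h 2 (by omega) u w huw).1, Nat.one_le_iff_ne_zero, ← Nat.pos_iff_ne_zero, Set.ncard_pos (Set.toFinite _)]
    exact ⟨w', hww', huw'⟩
  have hb1 : 1 ≤ b 1 := by
    rw [← (h 1 (by omega) u w' huw').2, Nat.one_le_iff_ne_zero, ← Nat.pos_iff_ne_zero, Set.ncard_pos (Set.toFinite _)]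
    exact ⟨w, hww'.symm, huw⟩
  have ha1 : ∀ x y, G.Adj x y →
      ({z : V | G.Adj y z ∧ G.dist x z = 1} : Set V).ncard + b 1 + 1 = b 0 := by
    intro x y hxy
    have h1 := h 1 (by omega) x y (adj1 hxy)
    rw [hc1] at h1
    obtain ⟨e1, e2⟩ := h1
    have key : ({z : V | G.Adj y z ∧ G.dist x z = 1} : Set V).ncard +
      ({z : V | G.Adj y z ∧ G.dist x z = 1 + 1} : Set V).ncard +
      ({z : V | G.Adj y z ∧ G.dist x z = 1 - 1} : Set V).ncard =
      ({z : V | G.Adj y z} : Set V).ncard := by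
      rw [← Set.ncard_union_eq, ← Set.ncard_union_eq]
      · congr 1; ext z; simp
        have := fun hz => split x y 1 (adj1 hxy) z hz
        simp at this
        tauto
      · rw [Set.disjoint_left]; rintro z hz hz'; simp only [Set.mem_union, Set.mem_setOf_eq] at hz hz'; omega
      · rw [Set.disjoint_left]; rintro z hz hz'; simp only [Set.mem_union, Set.mem_setOf_eq] at hz hz'; omega
    rw [e1, e2, hdeg] at key; exact key
  have hb10 : b 1 + 1 ≤ b 0 := by
    have := ha1 u w' (SimpleGraph.dist_eq_one_iff_adj.mp huw')
    omega
  refine ⟨hb2, hc3, hc2, hb1, hb10, ?_, ?_, ?_, ha1⟩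
  · intro x y
    rw [cnt_eq G hc]
    have hd := hle x y
    have : G.dist x y = 0 ∨ G.dist x y = 1 ∨ G.dist x y = 2 ∨ G.dist x y = 3 := by omega
    rcases this with h0 | h0 | h0 | h0
    · have := (h 0 (by omega) x y h0).2
      simp at this
      simp [h0, this]
    · have := ha1 x y (SimpleGraph.dist_eq_one_iff_adj.mp h0)
      have h4 : (({z : V | G.Adj y z ∧ G.dist x z = 1} : Set V).ncard : ℝ) + b 1 + 1 = b 0 := by
        exact_mod_cast this
      rw [if_neg (by omega), if_pos h0]; linarith
    · have := (h 2 (by omega) x y h0).1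
      rw [if_neg (by omega), if_neg (by omega), if_pos h0]
      simp at this
      simp [this]
    · rw [if_neg (by omega), if_neg (by omega), if_neg (by omega)]
      have := fun z hz => split x y 3 h0 z hz
      rw [Nat.cast_eq_zero, Set.ncard_eq_zero (Set.toFinite _), Set.eq_empty_iff_forall_notMem]
      rintro z ⟨h1, h2⟩
      have := this z h1; omega
  · intro x y
    rw [cnt_eq G hc]
    have hd := hle x y
    by_cases h0 : G.dist x y = 2
    · have := (h 2 (by omega) x y h0).2
      rw [hb2] at this
      simp at this
      simp [h0, this]
    · rw [if_neg h0]
      rw [Nat.cast_eq_zero, Set.ncard_eq_zero (Set.toFinite _), Set.eq_empty_iff_forall_notMem]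
      rintro z ⟨h1, h2⟩
      have h3 := split x y _ rfl z h1
      have h4 : G.dist x y = 3 := by omega
      exact a3 x y h4 z h1 h2
  · intro y
    rw [← hdeg y, Set.ncard_eq_toFinset_card', Finset.card_eq_sum_ones, Nat.cast_sum]
    simp only [distM, Matrix.of_apply, Set.toFinset_setOf, Finset.sum_filter,
      SimpleGraph.dist_eq_one_iff_adj]
    simp

theorem spec_of_mul (D M : Matrix V V ℝ) (l : ℝ) (hM : M ≠ 0) (h : D * M = l • M) :
    l ∈ spectrum ℝ D := by
  rw [spectrum.mem_iff]
  intro hu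
  apply hM
  have : (algebraMap ℝ (Matrix V V ℝ) l - D) * M = 0 := by
    rw [sub_mul, h, Algebra.algebraMap_eq_smul_one, smul_mul_assoc, one_mul, sub_self]
  exact (hu.mul_right_eq_zero).mp this

theorem proj_rank (M : Matrix V V ℝ) (l : ℝ) (hl : l ≠ 0) (h : M * M = l • M) :
    ∃ W : Submodule ℝ (V → ℝ), (Module.finrank ℝ W : ℝ) * l = M.trace ∧
      ∀ z, (fun y => M y z) ∈ W := by
  have hid : IsIdempotentElem (Matrix.toLin' (l⁻¹ • M)) := by
    unfold IsIdempotentElem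
    rw [Module.End.mul_eq_comp, ← Matrix.toLin'_mul]
    congr 1
    rw [smul_mul_smul_comm, h, smul_smul]
    congr 1
    field_simp
  refine ⟨LinearMap.range (Matrix.toLin' M), ?_, ?_⟩
  · have h1 := (LinearMap.IsIdempotentElem.isProj_range _ hid).trace
    have h2 : LinearMap.range (Matrix.toLin' (l⁻¹ • M)) = LinearMap.range (Matrix.toLin' M) := by
      rw [map_smul]
      exact LinearMap.range_smul _ _ (inv_ne_zero hl)
    rw [h2, Matrix.trace_toLin'_eq, Matrix.trace_smul] at h1
    rw [← h1, smul_eq_mul]; field_simp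
  · intro z
    refine ⟨Pi.single z 1, ?_⟩
    ext y; simp

theorem table (A K J : Matrix V V ℝ) (k a c n r : ℝ) (hc : c ≠ 0) (hk : k ≠ 0) (hJ : J ≠ 0)
    (hAJ : A * J = k • J) (hJJ : J * J = n • J) (hJK : J * K = r • J)
    (hAA : A * A = k • 1 + a • A + c • (J - A - K))
    (hAK : A * K = J - K) (hKJ : K * J = r • J) :
    n = r * (k + 1) ∧ c * (r - 1) = k - 1 - a ∧ K * K = r • K := by
  have e1 : (n - r - r * k) • J = 0 := by
    have : A * K * J = A * (K * J) := mul_assoc _ _ _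
    rw [hAK, hKJ, sub_mul, hJJ, hKJ, mul_smul_comm, hAJ] at this
    rw [sub_smul, sub_smul, this, smul_smul, sub_self]
  have e1' : n = r * (k + 1) := by
    have := (smul_eq_zero.mp e1).resolve_right hJ; linarith
  have e2 : (k * k - k - a * k - c * (n - k - r)) • J = 0 := by
    have : A * A * J = A * (A * J) := mul_assoc _ _ _
    rw [hAA, hAJ, mul_smul_comm, hAJ] at this
    simp only [add_mul, sub_mul, smul_mul_assoc, one_mul, hAJ, hJJ, hKJ] at this
    have h3 : (k * k) • J = k • J + a • k • J + c • (n • J - k • J - r • J) := by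
      rw [this, smul_smul]
    have h4 : (k * k - k - a * k - c * (n - k - r)) • J = (k * k) • J -
      (k • J + a • k • J + c • (n • J - k • J - r • J)) := by module
    rw [h4, h3, sub_self]
  have e2' : c * (r - 1) = k - 1 - a := by
    have := (smul_eq_zero.mp e2).resolve_right hJ
    rw [e1'] at this
    have h3 : k * (k - 1 - a - c * (r - 1)) = 0 := by linarith
    have := (mul_eq_zero.mp h3).resolve_left hk
    linarith
  refine ⟨e1', e2', ?_⟩
  have e3 : A * A * K = A * (A * K) := mul_assoc _ _ _
  rw [hAA, hAK, mul_sub, hAJ, hAK] at e3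
  simp only [add_mul, sub_mul, smul_mul_assoc, one_mul, hAK, hJK] at e3
  have e4 : c • (K * K) = c • (r • K) := by
    have h5 : a = k - 1 - c * (r - 1) := by linarith
    have h6 : c • (K * K) = (k • K + a • (J - K) + c • (r • J - (J - K))) -
       (k • K + a • (J - K) + c • (r • J - (J - K) - K * K)) := by module
    rw [h6, e3, h5]
    module
  exact smul_right_injective _ hc e4

theorem eigM (A K J : Matrix V V ℝ) (k a c r ρ σ : ℝ) 
    (hAJ : A * J = k • J) (hJA : J * A = k • J)
    (hJJ : J * J = (r * (k + 1)) • J) (hJK : J * K = r • J)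
    (hAA : A * A = k • 1 + a • A + c • (J - A - K))
    (hAK : A * K = J - K) (hKA : K * A = J - K) (hKJ : K * J = r • J) (hKK : K * K = r • K)
    (hcr : c * (r - 1) = k - 1 - a) (hs : ρ + σ = a - c) (hp : ρ * σ = -k)
    (M : Matrix V V ℝ) (hM : M = r • A - J + K - (σ * r) • 1 + σ • K) :
    A * M = ρ • M ∧ K * M = 0 ∧ J * M = 0 ∧ M * M = (r * (ρ - σ)) • M := by
  have h1 : A * M = ρ • M := by
    have hk : k = - (ρ * σ) := by linarith
    have ha : a = ρ + σ + c := by linarith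
    have hcr' : c * r = - (ρ * σ) - 1 - ρ - σ := by
      rw [hk, ha] at hcr; linarith
    rw [hM]
    simp only [mul_add, mul_sub, mul_smul_comm, mul_one, hAA, hAK, hAJ]
    have : r • (k • (1 : Matrix V V ℝ) + a • A + c • (J - A - K)) =
       (r * k) • (1 : Matrix V V ℝ) + (r * a) • A + (c * r) • (J - A - K) := by module
    rw [this, hcr', hk]
    have : (r * a) • A = (r * (ρ + σ) + c * r) • A := by rw [ha]; module
    rw [this, hcr']
    module
  have h2 : K * M = 0 := by
    rw [hM]
    simp only [mul_add, mul_sub, mul_smul_comm, mul_one, hKA, hKK, hKJ]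
    module
  have h3 : J * M = 0 := by
    rw [hM]
    simp only [mul_add, mul_sub, mul_smul_comm, mul_one, hJA, hJJ, hJK]
    module
  refine ⟨h1, h2, h3, ?_⟩
  nth_rewrite 1 [hM]
  simp only [add_mul, sub_mul, smul_mul_assoc, one_mul, h1, h2, h3]
  module

noncomputable def KM (G : SimpleGraph V) : Matrix V V ℝ := 1 + distM G 3

def JM (V : Type*) : Matrix V V ℝ := Matrix.of fun _ _ => 1

theorem KM_apply (G : SimpleGraph V) (hc : G.Connected) (x y : V) :
    KM G x y = if G.dist x y = 0 then 1 else if G.dist x y = 3 then 1 else 0 := by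
  by_cases h : x = y
  · subst h; simp [KM, distM]
  · have : G.dist x y ≠ 0 := by
      rw [Ne, hc.dist_eq_zero_iff]; exact h
    simp [KM, distM, h, this]

theorem distM_symm (G : SimpleGraph V) (i : ℕ) : (distM G i)ᵀ = distM G i := by
  ext x y; simp [distM, SimpleGraph.dist_comm]

theorem core1 (G : SimpleGraph V) (b c : ℕ → ℕ) (hG : IsDRG G 3 b c)
    (hant : IsAntipodal G 3) (A K J : Matrix V V ℝ) (hA : A = distM G 1) (hK : K = KM G)
    (hJ : J = JM V) :
    ∃ t : ℕ, 1 ≤ t ∧ c 2 * t = b 1 ∧ Fintype.card V = (t + 1) * (b 0 + 1) ∧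
    A * J = (b 0 : ℝ) • J ∧ J * A = (b 0 : ℝ) • J ∧
    J * J = ((t + 1 : ℝ) * ((b 0 : ℝ) + 1)) • J ∧ J * K = (t + 1 : ℝ) • J ∧
    A * A = (b 0 : ℝ) • 1 + ((b 0 : ℝ) - 1 - b 1) • A + (c 2 : ℝ) • (J - A - K) ∧
    A * K = J - K ∧ K * A = J - K ∧ K * J = (t + 1 : ℝ) • J ∧ K * K = (t + 1 : ℝ) • K := by
  classical
  obtain ⟨hb2, hc3, hc2, hb1, hb10, hAA, hTA, hdeg, -⟩ := basic_facts G b c hG hant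
  obtain ⟨hc, hle, ⟨u, v, huv⟩, -, -⟩ := hG
  have hc2' : (c 2 : ℝ) ≠ 0 := by positivity
  have hk : (b 0 : ℝ) ≠ 0 := by
    have : 0 < b 0 := by omega
    positivity
  have hJ0 : J ≠ 0 := by
    intro h
    have := congrFun (congrFun h u) v
    simp [hJ, JM] at this
  have cases4 : ∀ x y, G.dist x y = 0 ∨ G.dist x y = 1 ∨ G.dist x y = 2 ∨ G.dist x y = 3 := by
    intro x y; have := hle x y; omega
  have At : Aᵀ = A := by rw [hA]; exact distM_symm G 1
  have Jt : Jᵀ = J := by rw [hJ]; rfl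
  have Kt : Kᵀ = K := by rw [hK]; simp [KM, distM_symm]
  have one_ap : ∀ x y, (1 : Matrix V V ℝ) x y = if G.dist x y = 0 then 1 else 0 := by
    intro x y
    rw [Matrix.one_apply]
    congr 1
    rw [hc.dist_eq_zero_iff]
  have H1 : A * J = (b 0 : ℝ) • J := by
    ext x y
    rw [Matrix.mul_apply, ← hdeg x, hA, hJ]
    simp [JM]
  have H2 : J * A = (b 0 : ℝ) • J := by
    have := congrArg Matrix.transpose H1
    rwa [Matrix.transpose_mul, Matrix.transpose_smul, At, Jt] at this
  have HAA : A * A = (b 0 : ℝ) • 1 + ((b 0 : ℝ) - 1 - b 1) • A + (c 2 : ℝ) • (J - A - K) := by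
    ext x y
    rw [hA, hAA, hK, hJ]
    simp only [Matrix.add_apply, Matrix.smul_apply, Matrix.sub_apply, KM_apply G hc, JM,
      Matrix.of_apply, one_ap, distM]
    rcases cases4 x y with h | h | h | h <;> simp [h]
  have HKA : K * A = J - K := by
    ext x y
    rw [hK, KM, add_mul, one_mul, hA, Matrix.add_apply, hTA, ← KM, hJ]
    simp only [Matrix.sub_apply, KM_apply G hc, JM,
      Matrix.of_apply, distM]
    rcases cases4 x y with h | h | h | h <;> simp [h]
  have HAK : A * K = J - K := by
    have := congrArg Matrix.transpose HKA
    rwa [Matrix.transpose_mul, Matrix.transpose_sub, At, Jt, Kt] at this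
  have HJJ : J * J = (Fintype.card V : ℝ) • J := by
    ext x y; simp [Matrix.mul_apply, hJ, JM]
  obtain ⟨r, HKJ⟩ : ∃ r : ℝ, K * J = r • J := by
    have h1 : A * A * J = A * (A * J) := mul_assoc _ _ _
    rw [HAA, H1, mul_smul_comm, H1] at h1
    simp only [add_mul, sub_mul, smul_mul_assoc, one_mul, H1, HJJ] at h1
    set k : ℝ := (b 0 : ℝ)
    set n : ℝ := (Fintype.card V : ℝ)
    set cc : ℝ := (c 2 : ℝ)
    set a : ℝ := k - 1 - b 1
    refine ⟨cc⁻¹ * (k + a * k + cc * (n - k) - k * k), ?_⟩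
    have h2 : cc • (K * J) = (k + a * k + cc * (n - k) - k * k) • J := by
      have h3 : cc • (K * J) = (k • J + a • k • J + cc • (n • J - k • J)) -
        (k • J + a • k • J + cc • (n • J - k • J - K * J)) := by module
      rw [h3, h1]; module
    rw [mul_smul, ← h2, smul_smul, inv_mul_cancel₀ hc2', one_smul]
  have hr : r = (Finset.univ.filter (fun z => G.dist u z = 3)).card + 1 := by
    have := congrFun (congrFun HKJ u) v
    simp only [Matrix.mul_apply, hJ, JM, Matrix.of_apply, mul_one, Matrix.smul_apply,
      smul_eq_mul] at this
    rw [← this, hK]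
    simp [KM, Matrix.add_apply, Finset.sum_add_distrib, distM, Matrix.one_apply]
    ring
  set t := (Finset.univ.filter (fun z => G.dist u z = 3)).card with ht
  have ht1 : 1 ≤ t := Finset.card_pos.mpr ⟨v, by simp [huv]⟩
  rw [hr] at HKJ
  have HJK : J * K = (t + 1 : ℝ) • J := by
    have := congrArg Matrix.transpose HKJ
    rwa [Matrix.transpose_mul, Matrix.transpose_smul, Kt, Jt] at this
  obtain ⟨e1, e2, e3⟩ := table A K J _ _ _ _ _ hc2' hk hJ0 H1 HJJ HJK HAA HAK HKJ
  refine ⟨t, ht1, ?_, by exact_mod_cast e1, H1, H2, by rw [← e1]; exact HJJ, HJK, HAA, HAK, HKA, HKJ, e3⟩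
  have : (c 2 : ℝ) * t = b 1 := by linarith
  exact_mod_cast this

theorem qDist_eq (G : SimpleGraph V) (hc : G.Connected) (hle : ∀ x y : V, G.dist x y ≤ 3) (q : ℝ) :
    qDist G 3 q = (1 + 1 / q) • (JM V - 1) - (1 / q) • distM G 1 + (1 / q) ^ 2 • (KM G - 1) := by
  have : Finset.Icc 1 3 = {1, 2, 3} := by decide
  ext x y
  have : G.dist x y = 0 ∨ G.dist x y = 1 ∨ G.dist x y = 2 ∨ G.dist x y = 3 := by
    have := hle x y; omega
  have one_ap : (1 : Matrix V V ℝ) x y = if G.dist x y = 0 then 1 else 0 := by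
    rw [Matrix.one_apply]
    congr 1
    rw [hc.dist_eq_zero_iff]
  simp only [qDist, ‹Finset.Icc 1 3 = _›]
  rcases this with h | h | h | h <;>
  simp [Matrix.add_apply, Matrix.sub_apply, Matrix.smul_apply, one_ap, KM_apply G hc, JM, distM, h,
    Finset.sum_range_succ] <;> ring

theorem core2 (G : SimpleGraph V) (b c : ℕ → ℕ) (hG : IsDRG G 3 b c)
    (hant : IsAntipodal G 3) :
    ∃ t : ℕ, 1 ≤ t ∧ c 2 * t = b 1 ∧ ∃ ρ σ : ℝ, 0 < ρ ∧ σ < 0 ∧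
      ρ + σ = (b 0 : ℝ) - 1 - b 1 - c 2 ∧ ρ * σ = - (b 0 : ℝ) ∧
      (∃ W : Submodule ℝ (V → ℝ), (Module.finrank ℝ W : ℝ) * (ρ - σ) = - σ * t * (b 0 + 1) ∧
        ∀ z, (fun y => (((t + 1 : ℝ)) • distM G 1 - JM V + KM G - (σ * (t + 1)) • 1 + σ • KM G)
          y z) ∈ W) ∧
      (∃ W : Submodule ℝ (V → ℝ), (Module.finrank ℝ W : ℝ) * (ρ - σ) = ρ * t * (b 0 + 1) ∧
        ∀ z, (fun y => (((t + 1 : ℝ)) • distM G 1 - JM V + KM G - (ρ * (t + 1)) • 1 + ρ • KM G)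
          y z) ∈ W) ∧
      ∀ q : ℝ, q ≠ 0 → (spectrum ℝ (qDist G 3 q)).ncard = 2 → ∃ x, (x = ρ ∨ x = σ) ∧
        (1 / q) * (t + 1) = - (1 + x) ∧ ∃ y, (y = ρ ∨ y = σ) ∧
        (1 + 1 / q) * ((t + 1) * (b 0 + 1)) - (1 / q) * b 0 + (1 / q) ^ 2 * (t + 1) + (1 / q) * y = 0 := by
  have hc2 := (basic_facts G b c hG hant).2.2.1
  have hb10 := (basic_facts G b c hG hant).2.2.2.2.1
  obtain ⟨t, ht, hct, hn, hAJ, hJA, hJJ, hJK, hAA, hAK, hKA, hKJ, hKK⟩ :=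
    core1 G b c hG hant _ _ _ rfl rfl rfl
  obtain ⟨hc, hle, ⟨u, v, huv⟩, -, -⟩ := hG
  refine ⟨t, ht, hct, ?_⟩
  have hkpos : (0 : ℝ) < b 0 := by
    have : 0 < b 0 := by omega
    positivity
  have htpos : (0 : ℝ) < t := by positivity
  obtain ⟨ρ, σ, hρ, hσ, hs, hp⟩ : ∃ ρ σ : ℝ, 0 < ρ ∧ σ < 0 ∧
      ρ + σ = (b 0 : ℝ) - 1 - b 1 - c 2 ∧ ρ * σ = - (b 0 : ℝ) := by
    set d := (b 0 : ℝ) - 1 - b 1 - c 2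
    have h1 : 0 < d ^ 2 + 4 * b 0 := by positivity
    have h2 := Real.sq_sqrt h1.le
    have h3 : |d| < √(d ^ 2 + 4 * b 0) := by
      rw [Real.lt_sqrt (abs_nonneg _), sq_abs]; linarith
    rw [abs_lt] at h3
    refine ⟨(d + √(d ^ 2 + 4 * b 0)) / 2, (d - √(d ^ 2 + 4 * b 0)) / 2, by linarith, by linarith,
      by ring, ?_⟩
    nlinarith
  have hcr : (c 2 : ℝ) * ((t + 1 : ℝ) - 1) = b 0 - 1 - ((b 0 : ℝ) - 1 - b 1) := by
    have : (c 2 : ℝ) * t = b 1 := by exact_mod_cast hct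
    linarith
  have trA : (distM G 1).trace = 0 := by
    simp [Matrix.trace, distM]
  have trK : (KM G).trace = Fintype.card V := by
    simp [Matrix.trace, KM, distM]
  have trJ : (JM V).trace = Fintype.card V := by
    simp [Matrix.trace, JM]
  have hn' : (Fintype.card V : ℝ) = (t + 1) * (b 0 + 1) := by exact_mod_cast hn
  obtain ⟨M1, hM1⟩ : ∃ M, M = ((t + 1 : ℝ)) • distM G 1 - JM V + KM G - (σ * (t + 1)) • 1 + σ • KM G :=
    ⟨_, rfl⟩
  obtain ⟨M2, hM2⟩ : ∃ M, M = ((t + 1 : ℝ)) • distM G 1 - JM V + KM G - (ρ * (t + 1)) • 1 + ρ • KM G :=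
    ⟨_, rfl⟩
  obtain ⟨a1, a2, a3, a4⟩ := eigM _ _ _ _ _ _ _ ρ σ hAJ hJA hJJ hJK hAA hAK hKA hKJ hKK hcr hs hp _ hM1
  obtain ⟨b1, b2, b3, b4⟩ := eigM _ _ _ _ _ _ _ σ ρ hAJ hJA hJJ hJK hAA hAK hKA hKJ hKK hcr
    (by linarith) (by linarith) _ hM2
  have tr1 : M1.trace = - σ * t * ((t + 1) * (b 0 + 1)) := by
    rw [hM1, Matrix.trace_add, Matrix.trace_sub, Matrix.trace_add, Matrix.trace_sub,
      Matrix.trace_smul, Matrix.trace_smul, Matrix.trace_smul, trA, trK, trJ, Matrix.trace_one, hn']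
    simp only [smul_eq_mul]; ring
  have tr2 : M2.trace = - ρ * t * ((t + 1) * (b 0 + 1)) := by
    rw [hM2, Matrix.trace_add, Matrix.trace_sub, Matrix.trace_add, Matrix.trace_sub,
      Matrix.trace_smul, Matrix.trace_smul, Matrix.trace_smul, trA, trK, trJ, Matrix.trace_one, hn']
    simp only [smul_eq_mul]; ring
  have ht0 : (t + 1 : ℝ) ≠ 0 := by positivity
  have hd1 : ρ - σ ≠ 0 := by intro h; linarith
  have hd2 : σ - ρ ≠ 0 := by intro h; linarith
  have M10 : M1 ≠ 0 := by
    intro h; rw [h, Matrix.trace_zero] at tr1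
    have : 0 < - σ * t * ((t + 1) * (b 0 + 1)) := by
      have : 0 < -σ := by linarith
      positivity
    linarith
  have M20 : M2 ≠ 0 := by
    intro h; rw [h, Matrix.trace_zero] at tr2
    have : 0 < ρ * t * ((t + 1) * (b 0 + 1)) := by
      positivity
    linarith
  refine ⟨ρ, σ, hρ, hσ, hs, hp, ?_, ?_, ?_⟩
  · rw [← hM1]
    obtain ⟨W, hW1, hW2⟩ := proj_rank M1 _ (mul_ne_zero ht0 hd1) a4
    refine ⟨W, ?_, hW2⟩
    rw [tr1] at hW1
    apply mul_left_cancel₀ ht0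
    linarith
  · rw [← hM2]
    obtain ⟨W, hW1, hW2⟩ := proj_rank M2 _ (mul_ne_zero ht0 hd2) b4
    refine ⟨W, ?_, hW2⟩
    rw [tr2] at hW1
    apply mul_left_cancel₀ ht0
    linarith
  · intro q hq h2
    have hD := qDist_eq G hc hle q
    have hs0 : 1 / q ≠ 0 := one_div_ne_zero hq
    set s := 1 / q
    have m1 : (-(1 + s) - s * ρ - s ^ 2) ∈ spectrum ℝ (qDist G 3 q) := by
      apply spec_of_mul _ M1 _ M10
      rw [hD]
      simp only [add_mul, sub_mul, smul_mul_assoc, one_mul, a1, a2, a3]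
      module
    have m2 : (-(1 + s) - s * σ - s ^ 2) ∈ spectrum ℝ (qDist G 3 q) := by
      apply spec_of_mul _ M2 _ M20
      rw [hD]
      simp only [add_mul, sub_mul, smul_mul_assoc, one_mul, b1, b2, b3]
      module
    have m3 : ((1 + s) * ((t + 1) * (b 0 + 1) - 1) - s * b 0 + s ^ 2 * t) ∈ spectrum ℝ (qDist G 3 q) := by
      apply spec_of_mul _ (JM V) _
      · intro h
        have := congrFun (congrFun h u) v
        simp [JM] at this
      · rw [hD]
        simp only [add_mul, sub_mul, smul_mul_assoc, one_mul, hAJ, hJJ, hKJ]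
        module
    have m4 : (-1 + s ^ 2 * t) ∈ spectrum ℝ (qDist G 3 q) := by
      apply spec_of_mul _ ((b 0 + 1 : ℝ) • KM G - JM V) _
      · intro h
        have := congrFun (congrFun h u) u
        simp [JM, KM, distM] at this
        linarith
      · rw [hD]
        simp only [add_mul, sub_mul, mul_sub, mul_smul_comm, smul_mul_assoc, one_mul, hAJ, hJJ, hKJ,
          hAK, hJK, hKK]
        module
    obtain ⟨p1, p2, hne, hset⟩ := Set.ncard_eq_two.mp h2
    have hne2 : (-(1 + s) - s * ρ - s ^ 2) ≠ (-(1 + s) - s * σ - s ^ 2) := by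
      intro h
      have : s * (ρ - σ) = 0 := by linarith
      rcases mul_eq_zero.mp this with h | h
      · exact hs0 h
      · exact hd1 h
    rw [hset] at m1 m2 m3 m4
    simp only [Set.mem_insert_iff, Set.mem_singleton_iff] at m1 m2 m3 m4
    have all : ∀ w, (w = p1 ∨ w = p2) → ∃ x, (x = ρ ∨ x = σ) ∧ w = -(1 + s) - s * x - s ^ 2 := by
      intro w hw
      by_cases e : w = -(1 + s) - s * ρ - s ^ 2
      · exact ⟨ρ, Or.inl rfl, e⟩
      · refine ⟨σ, Or.inr rfl, ?_⟩
        rcases m1 with m1 | m1 <;> rcases m2 with m2 | m2 <;> rcases hw with hw | hw <;>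
          first
          | exact absurd (m1.trans m2.symm) hne2
          | exact absurd (hw.trans m1.symm) e
          | exact hw.trans m2.symm
    obtain ⟨x, hx, ex⟩ := all _ m4
    obtain ⟨y, hy, ey⟩ := all _ m3
    refine ⟨x, hx, ?_, y, hy, by linarith⟩
    apply mul_left_cancel₀ hs0
    linarith

theorem dep_exists {ι S : Type*} [Fintype ι] [Fintype S] (f : ι → S → ℝ)
    (h : Fintype.card ι < Fintype.card S) :
    ∃ g : S → ℝ, g ≠ 0 ∧ ∀ i, ∑ y, f i y * g y = 0 := by
  have := LinearMap.ker_ne_bot_of_finrank_lt (f := (Matrix.mulVecLin (Matrix.of f)))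
    (by simpa using h)
  obtain ⟨g, hg, hg0⟩ := (Submodule.ne_bot_iff _).mp this
  refine ⟨g, hg0, fun i => ?_⟩
  have := congrFun (LinearMap.mem_ker.mp hg) i
  simpa [Matrix.mulVec, dotProduct] using this

theorem dep_lin {S : Type*} [Fintype S] (e : S → V) (W : Submodule ℝ (V → ℝ))
    (h : Module.finrank ℝ W < Fintype.card S) :
    ∃ g : S → ℝ, g ≠ 0 ∧ ∀ w ∈ W, ∑ y, w (e y) * g y = 0 := by
  let β := Module.finBasis ℝ W
  obtain ⟨g, hg, H⟩ := dep_exists (fun (a : Fin (Module.finrank ℝ W)) (y : S) => (β a : V → ℝ) (e y))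
    (by simpa using h)
  refine ⟨g, hg, fun w hw => ?_⟩
  have hw' : w = ∑ a, β.repr ⟨w, hw⟩ a • (β a : V → ℝ) := by
    have h9 := congrArg (W.subtype) (β.sum_repr ⟨w, hw⟩)
    rw [map_sum] at h9
    exact h9.symm
  generalize β.repr ⟨w, hw⟩ = co at hw'
  rw [hw']
  simp only [Finset.sum_apply, Pi.smul_apply, smul_eq_mul, Finset.sum_mul]
  rw [Finset.sum_comm]
  refine Finset.sum_eq_zero fun a _ => ?_
  have := H a
  simp only [mul_assoc]
  rw [← Finset.mul_sum, this, mul_zero]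

theorem dep_sq {S : Type*} [Fintype S] (e : S → V) (W : Submodule ℝ (V → ℝ))
    (h8 : Module.finrank ℝ W = 8) (h : 36 < Fintype.card S) :
    ∃ g : S → ℝ, g ≠ 0 ∧ ∀ w ∈ W, ∑ y, (w (e y)) ^ 2 * g y = 0 := by
  let β := Module.finBasisOfFinrankEq ℝ W h8
  obtain ⟨g, hg, H⟩ := dep_exists (fun (a : {p : Fin 8 × Fin 8 // p.1 ≤ p.2}) (y : S) =>
    (β a.1.1 : V → ℝ) (e y) * (β a.1.2 : V → ℝ) (e y))
    (lt_of_le_of_lt (le_of_eq (by decide)) h)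
  refine ⟨g, hg, fun w hw => ?_⟩
  have hw' : w = ∑ a, β.repr ⟨w, hw⟩ a • (β a : V → ℝ) := by
    have h9 := congrArg (W.subtype) (β.sum_repr ⟨w, hw⟩)
    rw [map_sum] at h9
    exact h9.symm
  have H' : ∀ a b, ∑ y, (β a : V → ℝ) (e y) * (β b : V → ℝ) (e y) * g y = 0 := by
    intro a b
    rcases le_total a b with hab | hab
    · exact H ⟨(a, b), hab⟩
    · rw [← H ⟨(b, a), hab⟩]
      refine Finset.sum_congr rfl fun y _ => by ring
  generalize β.repr ⟨w, hw⟩ = co at hw'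
  rw [hw']
  simp only [Finset.sum_apply, Pi.smul_apply, smul_eq_mul, sq, Finset.sum_mul_sum]
  simp only [Finset.sum_mul]
  rw [Finset.sum_comm]
  refine Finset.sum_eq_zero fun a _ => ?_
  rw [Finset.sum_comm]
  refine Finset.sum_eq_zero fun b _ => ?_
  rw [← mul_zero (co a * co b), ← H' a b, Finset.mul_sum]
  refine Finset.sum_congr rfl fun y _ => by ring

theorem nbr_card (G : SimpleGraph V) (b c : ℕ → ℕ) (hG : IsDRG G 3 b c) (u : V)
    [Fintype (G.neighborSet u)] :
    Fintype.card (G.neighborSet u) = b 0 := by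
  classical
  have := (hG.2.2.2.2 0 (by omega) u u (by simp)).2
  rw [← this, ← Nat.card_eq_fintype_card, Nat.card_coe_set_eq]
  congr 1
  ext z; simp

theorem nbr_deg (G : SimpleGraph V) (b c : ℕ → ℕ) (hG : IsDRG G 3 b c) (hant : IsAntipodal G 3)
    (u : V) (y : G.neighborSet u) [Fintype (G.neighborSet u)]
    [DecidableRel (G.induce (G.neighborSet u)).Adj] :
    (G.induce (G.neighborSet u)).degree y + b 1 + 1 = b 0 := by
  classical
  have h := (basic_facts G b c hG hant).2.2.2.2.2.2.2.2 u y y.2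
  rw [← h]
  congr 2
  rw [← SimpleGraph.card_neighborFinset_eq_degree, ← Set.ncard_coe_finset,
    ← Set.ncard_image_of_injective _ Subtype.val_injective]
  congr 1
  ext z
  simp

theorem excl_hand (G : SimpleGraph V) (b c : ℕ → ℕ) (hG : IsDRG G 3 b c) (hant : IsAntipodal G 3)
    (h0 : b 0 = 35) (h1 : b 1 = 27) : False := by
  classical
  obtain ⟨u, -, -⟩ := hG.2.2.1
  have h2 := (G.induce (G.neighborSet u)).sum_degrees_eq_twice_card_edges
  have h3 : ∀ y, (G.induce (G.neighborSet u)).degree y = 7 := by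
    intro y
    have := nbr_deg G b c hG hant u y
    omega
  simp only [h3, Finset.sum_const, Finset.card_univ, nbr_card G b c hG u, h0, smul_eq_mul] at h2
  omega

theorem nbr_dist (G : SimpleGraph V) (hc : G.Connected) (u : V) (y z : G.neighborSet u) :
    (y = z ∧ G.dist y.1 z = 0) ∨ (y ≠ z ∧ G.Adj y.1 z ∧ G.dist y.1 z = 1) ∨
      (y ≠ z ∧ ¬ G.Adj y.1 z ∧ G.dist y.1 z = 2) := by
  by_cases h : y = z
  · subst h; left; simp
  · right
    by_cases h1 : G.Adj y.1 z
    · left; exact ⟨h, h1, SimpleGraph.dist_eq_one_iff_adj.mpr h1⟩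
    · right
      refine ⟨h, h1, ?_⟩
      have t := hc.dist_triangle (u := y.1) (v := u) (w := z.1)
      have hy : G.Adj u y := y.2
      have hz : G.Adj u z := z.2
      rw [SimpleGraph.dist_eq_one_iff_adj.mpr hy.symm, SimpleGraph.dist_eq_one_iff_adj.mpr hz] at t
      have h3 : G.dist y.1 z ≠ 0 := by
        rw [Ne, hc.dist_eq_zero_iff]; exact fun e => h (Subtype.ext e)
      have h4 : G.dist y.1 z ≠ 1 := by
        rw [Ne, SimpleGraph.dist_eq_one_iff_adj]; exact h1
      omega

theorem excl63 (G : SimpleGraph V) (b c : ℕ → ℕ) (hG : IsDRG G 3 b c)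
    (h0 : b 0 = 63) (W : Submodule ℝ (V → ℝ)) (h8 : Module.finrank ℝ W = 8)
    (hW : ∀ z, (fun y => ((2 : ℝ) • distM G 1 - JM V + KM G - (6 : ℝ) • 1 + (3 : ℝ) • KM G)
          y z) ∈ W) : False := by
  classical
  obtain ⟨u, -, -⟩ := hG.2.2.1
  have hc := hG.1
  have hcard := nbr_card G b c hG u
  obtain ⟨g, hg, H⟩ := dep_sq (fun y : G.neighborSet u => y.1) W h8 (by omega)
  have H2 : ∀ z, 8 * g z + ∑ y, g y = 0 := by
    intro z
    have := H _ (hW z.1)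
    rw [← this]
    have : 8 * g z = ∑ y, if y = z then 8 * g y else 0 := by simp
    rw [this, ← Finset.sum_add_distrib]
    refine Finset.sum_congr rfl fun y _ => ?_
    simp only [Matrix.add_apply, Matrix.sub_apply, Matrix.smul_apply, KM_apply G hc, JM, distM,
      Matrix.of_apply, Matrix.one_apply, smul_eq_mul, ← Subtype.ext_iff]
    rcases nbr_dist G hc u y z with ⟨e, e'⟩ | ⟨e, -, e'⟩ | ⟨e, -, e'⟩ <;> simp [e, e'] <;> ring
  have H3 : ∑ z, (8 * g z + ∑ y, g y) = 0 := Finset.sum_eq_zero fun z _ => H2 z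
  rw [Finset.sum_add_distrib, ← Finset.mul_sum, Finset.sum_const, Finset.card_univ, hcard, h0] at H3
  have H4 : ∑ y, g y = 0 := by
    simp at H3; linarith
  apply hg
  ext z
  have := H2 z
  rw [H4] at this
  simp; linarith

theorem excl15 (G : SimpleGraph V) (b c : ℕ → ℕ) (hG : IsDRG G 3 b c)
    (h0 : b 0 = 15) (W : Submodule ℝ (V → ℝ)) (h12 : Module.finrank ℝ W = 12)
    (hW : ∀ z, (fun y => ((3 : ℝ) • distM G 1 - JM V + KM G - (-9 : ℝ) • 1 + (-3 : ℝ) • KM G)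
          y z) ∈ W) : False := by
  classical
  obtain ⟨u, -, -⟩ := hG.2.2.1
  have hc := hG.1
  have hcard := nbr_card G b c hG u
  obtain ⟨g, hg, H⟩ := dep_lin (fun y : G.neighborSet u => y.1) W (by omega)
  let M : Matrix (G.neighborSet u) (G.neighborSet u) ℤ :=
    Matrix.of fun z y => (if y = z then 7 else 0) + (if G.Adj y.1 z then 3 else 0) - 1
  have hM : (M.map (Int.castRingHom ℝ)) *ᵥ g = 0 := by
    ext z
    have := H _ (hW z.1)
    rw [Pi.zero_apply, ← this, Matrix.mulVec, dotProduct]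
    refine Finset.sum_congr rfl fun y _ => ?_
    simp only [Matrix.add_apply, Matrix.sub_apply, Matrix.smul_apply, KM_apply G hc, JM, distM,
      Matrix.of_apply, Matrix.one_apply, smul_eq_mul, ← Subtype.ext_iff, M, Matrix.map_apply]
    rcases nbr_dist G hc u y z with ⟨e, e'⟩ | ⟨e, e2, e'⟩ | ⟨e, e2, e'⟩
    · subst e; simp; left; norm_num
    · simp [e, e2, e']; left; norm_num
    · simp [e, e2, e']
  have hdet : M.det ≠ 0 := by
    intro h
    have h1 := congrArg (Int.castRingHom (ZMod 3)) h
    rw [RingHom.map_det, map_zero, RingHom.mapMatrix_apply] at h1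
    have h2 : M.map (Int.castRingHom (ZMod 3)) = 1 - Matrix.of fun _ _ => 1 := by
      ext z y
      have e3 : (3 : ZMod 3) = 0 := by decide
      have e7 : (7 : ZMod 3) = 1 := by decide
      simp only [M, Matrix.map_apply, Matrix.of_apply, Matrix.sub_apply, Matrix.one_apply]
      by_cases a : y = z
      · subst a; simp; decide
      · have a' : z ≠ y := fun h => a h.symm
        by_cases e : G.Adj y.1 z <;> simp [a, a', e] <;> decide
    have h3 : (1 - Matrix.of fun _ _ => 1 : Matrix (G.neighborSet u) (G.neighborSet u) (ZMod 3)) *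
        (1 + Matrix.of fun _ _ => 1) = 1 := by
      have : (Matrix.of fun _ _ => 1 : Matrix (G.neighborSet u) (G.neighborSet u) (ZMod 3)) *
        (Matrix.of fun _ _ => 1) = 0 := by
        ext z y
        have e15 : (15 : ZMod 3) = 0 := by decide
        rw [Matrix.mul_apply]
        simp only [Matrix.of_apply, mul_one, Finset.sum_const, Finset.card_univ, hcard, h0,
          Matrix.zero_apply, nsmul_eq_mul]
        exact_mod_cast e15
      rw [sub_mul, mul_add, mul_add, this]
      simp
    have h4 := Matrix.isUnit_det_of_right_inverse h3
    rw [← h2, h1] at h4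
    exact not_isUnit_zero h4
  apply hg
  apply Matrix.eq_zero_of_mulVec_eq_zero _ hM
  rw [← RingHom.mapMatrix_apply, ← RingHom.map_det]
  simpa using hdet

theorem int_root (x : ℝ) (δ k P Q : ℤ) (hx : x * x = δ * x + k) (hQ : Q ≠ 0) (h : x * Q = P) :
    ∃ z : ℤ, x = z := by
  have hQ' : (Q : ℝ) ≠ 0 := by exact_mod_cast hQ
  have hxq : x = (((P : ℚ) / Q : ℚ) : ℝ) := by
    push_cast; field_simp; exact h
  have h2 : ((P : ℚ) / Q) * ((P : ℚ) / Q) = δ * ((P : ℚ) / Q) + k := by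
    rw [hxq] at hx; exact_mod_cast hx
  generalize (P : ℚ) / Q = y at *
  have hi : IsIntegral ℤ y := by
    refine ⟨Polynomial.X ^ 2 + (Polynomial.C (-δ) * Polynomial.X + Polynomial.C (-k)), ?_, ?_⟩
    · apply Polynomial.monic_X_pow_add
      exact lt_of_le_of_lt Polynomial.degree_linear_le (by norm_num)
    · simp only [Polynomial.eval₂_add, Polynomial.eval₂_mul, Polynomial.eval₂_C, Polynomial.eval₂_X,
        Polynomial.eval₂_pow]
      simp only [eq_intCast]
      push_cast; linear_combination h2
  obtain ⟨z, hz⟩ := IsIntegrallyClosed.isIntegral_iff.mp hi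
  refine ⟨z, ?_⟩
  rw [hxq, ← hz]; simp

theorem dioA (x m r : ℤ) (hr : 2 ≤ r) (hm : 2 ≤ m) (hx : 0 < x)
    (h : (x - r + 1) * r * (1 + x * m) = (1 + x) ^ 2 * (1 + m)) :
    x = 5 ∧ m = 7 ∧ r = 2 ∨ x = 5 ∧ m = 7 ∧ r = 4 ∨ x = 5 ∧ m = 3 ∧ r = 3 := by
  have hxm : 0 < x * m := by positivity
  have h1 : 0 < x - r + 1 := by
    by_contra hh
    have : (x - r + 1) * r * (1 + x * m) ≤ 0 := by
      apply mul_nonpos_of_nonpos_of_nonneg _ (by positivity)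
      apply mul_nonpos_of_nonpos_of_nonneg <;> linarith
    have : 0 < (1 + x) ^ 2 * (1 + m) := by positivity
    linarith
  have hne : r ≠ x := by
    rintro rfl
    nlinarith
  have two : 2 * (x - 1) * (1 + x * m) = (1 + x) ^ 2 * (1 + m) → x = 5 ∧ m = 7 := by
    intro h
    have e : m * (x ^ 2 - 4 * x - 1) = x ^ 2 + 3 := by linarith
    have hx8 : x ≤ 8 := by
      by_contra hh
      push Not at hh
      nlinarith
    interval_cases x <;> omega
  by_cases e2 : r = 2
  · subst e2; left
    obtain ⟨a, b⟩ := two (by rw [← h]; ring)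
    exact ⟨a, b, rfl⟩
  by_cases e3 : r = x - 1
  · subst e3; right; left
    obtain ⟨a, b⟩ := two (by rw [← h]; ring)
    exact ⟨a, b, by omega⟩
  have h3 : 3 ≤ r := by omega
  have h4 : r ≤ x - 2 := by omega
  have p : 3 * (x - 2) ≤ (x - r + 1) * r := by nlinarith
  have p2 : 3 * (x - 2) * (1 + x * m) ≤ (1 + x) ^ 2 * (1 + m) := by
    rw [← h]; exact mul_le_mul_of_nonneg_right p (by positivity)
  have hx5 : x ≤ 5 := by
    by_contra hh
    push Not at hh
    nlinarith [mul_nonneg (sub_nonneg.mpr hm) (sub_nonneg.mpr (show (6:ℤ) ≤ x from hh)), mul_nonneg (mul_nonneg (sub_nonneg.mpr hm) (sub_nonneg.mpr (show (6:ℤ) ≤ x from hh))) (sub_nonneg.mpr (show (6:ℤ) ≤ x from hh))]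
  have : x = 5 := by omega
  subst this
  have : r = 3 := by omega
  subst this
  right; right; refine ⟨rfl, by linarith, rfl⟩

theorem stmt13 (G : SimpleGraph V) (b c : ℕ → ℕ) (hG : IsDRG G 3 b c)
    (hant : IsAntipodal G 3) (q : ℝ) (hq : q ≠ 0)
    (h2 : (spectrum ℝ (qDist G 3 q)).ncard = 2) :
    (q = -(1 / 2) ∧
      ((b 0 = 9 ∧ b 1 = 4 ∧ b 2 = 1 ∧ c 2 = 4 ∧ c 3 = 9) ∨
       (b 0 = 15 ∧ b 1 = 8 ∧ b 2 = 1 ∧ c 2 = 8 ∧ c 3 = 15) ∨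
       (b 0 = 27 ∧ b 1 = 16 ∧ b 2 = 1 ∧ c 2 = 16 ∧ c 3 = 27))) ∨
    (q = -(1 / 3) ∧ (b 0 = 35 ∧ b 1 = 18 ∧ b 2 = 1 ∧ c 2 = 18 ∧ c 3 = 35)) := by
  obtain ⟨hb2, hc3, hc2, hb1, hb10, -⟩ := basic_facts G b c hG hant
  obtain ⟨t, ht, hct, ρ, σ, hρ, hσ, hs, hp, ⟨W1, hd1, hW1⟩, ⟨W2, hd2, hW2⟩, H⟩ :=
    core2 G b c hG hant
  obtain ⟨x, hx, ex, y, hy, ey⟩ := H q hq h2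
  have hhand := excl_hand G b c hG hant
  have h63 := excl63 G b c hG
  have h15 := excl15 G b c hG
  have hs0 : 1 / q ≠ 0 := one_div_ne_zero hq
  have hqs : q = 1 / (1 / q) := by simp
  generalize hss : 1 / q = s at *
  have hct' : (c 2 : ℤ) * t = b 1 := by exact_mod_cast hct
  have hctR : (c 2 : ℝ) * t = b 1 := by exact_mod_cast hct
  obtain ⟨k, hk⟩ : ∃ k : ℤ, k = b 0 := ⟨_, rfl⟩
  have hkR : (b 0 : ℝ) = k := by rw [hk]; simp
  obtain ⟨δ, hδ⟩ : ∃ δ : ℤ, δ = k - 1 - b 1 - c 2 := ⟨_, rfl⟩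
  have hδR : (b 0 : ℝ) - 1 - b 1 - c 2 = δ := by rw [hδ, hk]; push_cast; ring
  rw [hδR] at hs
  rw [hkR] at hp ey hd1 hd2
  have hkpos : 0 < k := by omega
  have htZ : (1 : ℤ) ≤ t := by exact_mod_cast ht
  have key : (1 + s) * ((t + 1) * (k + 1)) - s * k - s * (1 + x) + s * y = 0 := by
    have : s ^ 2 * (t + 1) = - s * (1 + x) := by
      rw [sq, mul_assoc, ex]; ring
    rw [this] at ey; linarith
  have hxx : x * x = δ * x + k := by
    rcases hx with rfl | rfl
    · have : σ = δ - x := by linarith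
      rw [this] at hp; linarith
    · have : ρ = δ - x := by linarith
      rw [this] at hp; linarith
  by_cases hxy : y = x
  · left
    subst hxy
    have hkR' : (0 : ℝ) < k := by exact_mod_cast hkpos
    have e1 : s * t = - (t + 1) := by
      have : ((k : ℝ) + 1) * (s * t + (t + 1)) = 0 := by linarith
      rcases mul_eq_zero.mp this with h | h
      · linarith
      · linarith
    have e2 : y * t = t ^ 2 + t + 1 := by
      have : s * (t + 1) * t = - (t + 1) * (t + 1) := by rw [← e1]; ring
      rw [ex] at this; linarith
    obtain ⟨z, hz⟩ := int_root y δ k (t ^ 2 + t + 1) t hxx (by omega) (by exact_mod_cast e2)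
    have e3 : z * t = t ^ 2 + t + 1 := by rw [hz] at e2; exact_mod_cast e2
    have ht1 : t = 1 := by
      have h1 : (t : ℤ) ∣ 1 := ⟨z - t - 1, by linarith⟩
      have := Int.le_of_dvd one_pos h1
      omega
    subst ht1
    have hz3 : z = 3 := by push_cast at e3; linarith
    have hy3 : y = 3 := by rw [hz, hz3]; norm_num
    have hyρ : y = ρ := by
      rcases hy with h | h
      · exact h
      · linarith
    have hρ3 : ρ = 3 := by rw [← hyρ, hy3]
    rw [hρ3] at hs hp hd1 hd2 hW2
    have hs2 : s = -2 := by push_cast at e1; linarith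
    have hq2 : q = -(1 / 2) := by rw [hqs, hs2]; norm_num
    refine ⟨hq2, ?_⟩
    obtain ⟨m, hm⟩ : ∃ m : ℤ, m = 3 - δ := ⟨_, rfl⟩
    have hσm : σ = -(m : ℝ) := by rw [hm]; push_cast; linarith
    have hkm : k = 3 * m := by
      rw [hσm] at hp
      have : (k : ℝ) = 3 * m := by linarith
      exact_mod_cast this
    have hc2m : (c 2 : ℤ) = 2 * m - 2 := by push_cast at hct'; omega
    have hm2 : 2 ≤ m := by omega
    have hdm : (Module.finrank ℝ W1 : ℤ) * (m + 3) = m * (3 * m + 1) := by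
      rw [hσm, hkm] at hd1
      push_cast at hd1
      have : (Module.finrank ℝ W1 : ℝ) * (m + 3) = m * (3 * m + 1) := by linarith
      exact_mod_cast this
    have hdvd : m + 3 ∣ 24 := ⟨Module.finrank ℝ W1 - 3 * m + 8, by linarith⟩
    have hm21 : m ≤ 21 := by have := Int.le_of_dvd (by norm_num) hdvd; omega
    have hmc : m = 3 ∨ m = 5 ∨ m = 9 ∨ m = 21 := by
      clear hd1 hd2 hW1 hW2 hdm hc2m hkm hσm hm
      interval_cases m <;> first | omega | (exfalso; revert hdvd; decide)
    have hb1m : b 1 = c 2 := by omega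
    rcases hmc with h | h | h | h
    · left; refine ⟨?_, ?_, ?_, ?_, ?_⟩ <;> omega
    · right; left; refine ⟨?_, ?_, ?_, ?_, ?_⟩ <;> omega
    · right; right; refine ⟨?_, ?_, ?_, ?_, ?_⟩ <;> omega
    · exfalso
      refine h63 (by omega) W2 ?_ ?_
      · rw [hσm, hkm, h] at hd2
        push_cast at hd2
        have : (Module.finrank ℝ W2 : ℝ) = 8 := by linarith
        exact_mod_cast this
      · intro z
        have := hW2 z
        norm_num at this
        norm_num
        exact this
  · have hyx : y = δ - x := by
      rcases hx with rfl | rfl <;> rcases hy with rfl | rfl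
      · exact absurd rfl hxy
      · linarith
      · linarith
      · exact absurd rfl hxy
    have e1 : ((k : ℝ) + 1) * (t - x) * (t + 1) = - (1 + x) * (k + 1 + x - y) := by
      have h1 : (t + 1) * ((k : ℝ) + 1) + (s * (t + 1)) * (k + 1) = s * (k + 1 + x - y) := by
        linarith
      rw [ex] at h1
      have h2 : ((k : ℝ) + 1) * (t - x) * (t + 1) = (s * (t + 1)) * (k + 1 + x - y) := by
        linear_combination (t + 1 : ℝ) * h1
      rw [ex] at h2; exact h2
    have e2 : x * (((1 + k) * (t + 1) - 3 - k - δ : ℤ) : ℝ) =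
        (((1 + k) * (t + 1) * t + 1 + 3 * k - δ : ℤ) : ℝ) := by
      push_cast
      rw [hyx] at e1
      linear_combination -e1 + 2 * hxx
    have hPpos : 0 < (1 + k) * (t + 1) * t + 1 + 3 * k - δ := by
      have : 0 < (1 + k) * (t + 1) * t := by positivity
      have : δ ≤ k := by omega
      linarith
    obtain ⟨z, hz⟩ := int_root x δ k _ _ hxx (by
      intro h0
      rw [h0, Int.cast_zero, mul_zero] at e2
      have : (0 : ℝ) < (((1 + k) * (t + 1) * t + 1 + 3 * k - δ : ℤ) : ℝ) := by exact_mod_cast hPpos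
      linarith) e2
    obtain ⟨w, hw⟩ : ∃ w : ℤ, w = δ - z := ⟨_, rfl⟩
    have hyw : y = w := by rw [hyx, hw, hz]; push_cast; ring
    have hzw : z * w = - k := by
      have : z * z = δ * z + k := by rw [hz] at hxx; exact_mod_cast hxx
      rw [hw]; linarith
    have hcr : (t + 1 : ℤ) * c 2 = - ((1 + z) * (1 + w)) := by
      have : δ = z + w := by omega
      have : z + w = k - 1 - c 2 * t - c 2 := by rw [← this, hδ, hct']
      linarith
    have e3 : (k + 1) * (t - z) * (t + 1) = - (1 + z) * (k + 1 + z - w) := by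
      rw [hz, hyw] at e1; exact_mod_cast e1
    have hcpos : 0 < (t + 1 : ℤ) * c 2 := by positivity
    have hk' : k = - (z * w) := by linarith
    rcases hx with hxρ | hxσ
    · have hρz : ρ = z := by rw [← hxρ, hz]
      have hσw : σ = w := by
        have : σ = δ - ρ := by linarith
        rw [this, hρz, hw]; push_cast; ring
      have hz0 : 0 < z := by rw [hρz] at hρ; exact_mod_cast hρ
      have hw0 : w < 0 := by rw [hσw] at hσ; exact_mod_cast hσ
      have hw2 : w ≤ -2 := by
        by_contra hh
        have : w = -1 := by omega
        rw [this] at hcr; norm_num at hcr; omega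
      have hd := dioA z (-w) (t + 1) (by omega) (by omega) hz0 (by
        rw [hk'] at e3; linear_combination -e3)
      rcases hd with ⟨hz5, hm7, ht2⟩ | ⟨hz5, hm7, ht2⟩ | ⟨hz5, hm7, ht2⟩
      · have hw7 : w = -7 := by omega
        have ht1 : t = 1 := by omega
        subst hz5 hw7 ht1
        right
        have hs3 : s = -3 := by rw [hz] at ex; push_cast at ex; linarith
        push_cast at hcr hct'
        refine ⟨by rw [hqs, hs3]; norm_num, ?_, ?_, ?_, ?_, ?_⟩ <;> omega
      · have hw7 : w = -7 := by omega
        have ht1 : t = 3 := by omega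
        subst hz5 hw7 ht1
        push_cast at hcr hct'
        exact (hhand (by omega) (by omega)).elim
      · have hw7 : w = -3 := by omega
        have ht1 : t = 2 := by omega
        subst hz5 hw7 ht1
        exfalso
        rw [hρz, hσw, hk'] at hd1
        rw [hσw] at hW1
        refine h15 (by omega) W1 ?_ ?_
        · push_cast at hd1
          have : (Module.finrank ℝ W1 : ℝ) = 12 := by linarith
          exact_mod_cast this
        · intro z
          have := hW1 z
          norm_num at this
          norm_num
          exact this
    · exfalso
      have hσz : σ = z := by rw [← hxσ, hz]
      have hρw : ρ = w := by
        have : ρ = δ - σ := by linarith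
        rw [this, hσz, hw]; push_cast; ring
      have hw0 : 0 < w := by rw [hρw] at hρ; exact_mod_cast hρ
      have hz0 : z < 0 := by rw [hσz] at hσ; exact_mod_cast hσ
      obtain ⟨m, hm⟩ : ∃ m : ℤ, m = - z := ⟨_, rfl⟩
      have hzm : z = -m := by omega
      have hm0 : 0 < m := by omega
      rw [hk', hzm] at e3
      have e4 : (1 + m * w) * (t + m) * (t + 1) = (m - 1) ^ 2 * (w - 1) := by
        linear_combination e3
      have l1 : (1 + m * w) * m * 1 ≤ (1 + m * w) * (t + m) * (t + 1) := by
        have : 0 < m * w := by positivity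
        gcongr <;> omega
      nlinarith [mul_pos hm0 hw0]
end

section
/- Let G be an antipodal distance-regular graph of diameter 3 which is an antipodal r-cover, with distinct adjacency eigenvalues k > θ₁ > θ₂ > θ₃, and let q > 0 be a real number. Then the q-distance matrix 𝔻_q has exactly three distinct eigenvalues if and only if θ₃ = −r/q − 1. -/
open Matrix

variable {V : Type*} [Fintype V] [DecidableEq V]

lemma aux_pred {V : Type*} (G : SimpleGraph V) (hc : G.Connected) (n : ℕ) (x y : V)
    (h : G.dist x y = n + 1) : ∃ z, G.Adj y z ∧ G.dist x z = n := by
  obtain ⟨p, hp⟩ := hc.exists_walk_length_eq_dist y x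
  rw [SimpleGraph.dist_comm, h] at hp
  cases p with
  | nil => simp at hp
  | cons hadj p' =>
    rename_i z
    refine ⟨z, hadj, ?_⟩
    have h1 := SimpleGraph.dist_le p'
    have h2 := hc.dist_triangle (u := x) (v := z) (w := y)
    have h3 : G.dist z y = 1 := SimpleGraph.dist_eq_one_iff_adj.mpr hadj.symm
    have h4 : G.dist z x = G.dist x z := SimpleGraph.dist_comm
    simp only [SimpleGraph.Walk.length_cons] at hp
    omega

lemma aux_spec {V : Type*} [Fintype V] [DecidableEq V] (M : Matrix V V ℝ) (μ : ℝ) :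
    μ ∈ spectrum ℝ M ↔ ∃ v : V → ℝ, v ≠ 0 ∧ M *ᵥ v = μ • v := by
  rw [← Matrix.spectrum_toLin', ← Module.End.hasEigenvalue_iff_mem_spectrum]
  constructor
  · intro h
    obtain ⟨v, hv⟩ := h.exists_hasEigenvector
    exact ⟨v, hv.2, by simpa using hv.apply_eq_smul⟩
  · rintro ⟨v, hv, h⟩
    refine Module.End.hasEigenvalue_of_hasEigenvector (x := v) ⟨?_, hv⟩
    rw [Module.End.mem_eigenspace_iff]
    simpa using h

lemma aux_count {V : Type*} [Fintype V] (P : V → Prop) [DecidablePred P] :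
    ∑ z, (if P z then (1 : ℝ) else 0) = (({z | P z} : Set V).ncard : ℝ) := by
  rw [Finset.sum_boole, Set.ncard_eq_toFinset_card']
  simp

lemma aux_smul {V : Type*} {v : V → ℝ} (hv : v ≠ 0) {a b : ℝ} (h : a • v = b • v) : a = b :=
  smul_left_injective ℝ hv h

lemma aux_ncard {V : Type*} [Finite V] (s : Set V) : s.ncard ≠ 0 ↔ s.Nonempty := by
  rw [← Nat.pos_iff_ne_zero, Set.ncard_pos]

/-- The linear-algebra core. -/
lemma aux_core {V : Type*} [Fintype V] [DecidableEq V] [Nonempty V]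
    (A K J D : Matrix V V ℝ) (k r a1 c2 n b1 p s : ℝ)
    (hJ : J = Matrix.of fun _ _ => (1 : ℝ))
    (hAJ : A * J = k • J) (hJA : J * A = k • J) (hJJ : J * J = n • J)
    (hKJ : K * J = r • J) (hJK : J * K = r • J)
    (hAK : A * K = J - K) (hKA : K * A = J - K) (hKK : K * K = r • K)
    (hAA : A * A = k • (1 : Matrix V V ℝ) + a1 • A + c2 • (J - A - K))
    (hD : D = (1 + p) • J - p • A + p ^ 2 • K - s • (1 : Matrix V V ℝ))
    (hn : n = r * (k + 1)) (hr : 2 ≤ r) (hp : 0 < p) (ha1 : 0 ≤ a1)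
    (hb1 : 0 ≤ b1) (hk : k = 1 + a1 + b1) (hc2 : 1 ≤ c2) (hc2k : c2 ≤ k)
    (θ₁ θ₂ θ₃ : ℝ) (h1 : k > θ₁) (h2 : θ₁ > θ₂) (h3 : θ₂ > θ₃)
    (hspec : spectrum ℝ A = ({k, θ₁, θ₂, θ₃} : Set ℝ)) :
    (spectrum ℝ D).ncard = 3 ↔ θ₃ = - r * p - 1 := by
  -- eigenvectors of A
  have hAJv : ∀ (v : V → ℝ) (θ : ℝ), A *ᵥ v = θ • v → θ ≠ k → J *ᵥ v = 0 := by
    intro v θ hv hne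
    by_contra h0
    have : (J * A) *ᵥ v = θ • (J *ᵥ v) := by rw [← mulVec_mulVec, hv, mulVec_smul]
    rw [hJA, smul_mulVec] at this
    exact hne (aux_smul h0 this).symm
  have hAKv : ∀ (v : V → ℝ) (θ : ℝ), A *ᵥ v = θ • v → J *ᵥ v = 0 → θ ≠ -1 → K *ᵥ v = 0 := by
    intro v θ hv hJv hne
    by_contra h0
    have : (K * A) *ᵥ v = θ • (K *ᵥ v) := by rw [← mulVec_mulVec, hv, mulVec_smul]
    rw [hKA, sub_mulVec, hJv, zero_sub, ← neg_one_smul ℝ] at this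
    exact hne (aux_smul h0 this).symm
  have hAAv : ∀ (v : V → ℝ) (θ : ℝ), A *ᵥ v = θ • v → J *ᵥ v = 0 →
      (θ * θ) • v = (k + a1 * θ - c2 * θ) • v - c2 • (K *ᵥ v) := by
    intro v θ hv hJv
    have : (A * A) *ᵥ v = (θ * θ) • v := by
      rw [← mulVec_mulVec, hv, mulVec_smul, hv, smul_smul]
    rw [← this, hAA]
    simp only [add_mulVec, sub_mulVec, smul_mulVec, one_mulVec, hv, hJv]
    module
  have hquad : ∀ (v : V → ℝ) (θ : ℝ), v ≠ 0 → A *ᵥ v = θ • v → J *ᵥ v = 0 → K *ᵥ v = 0 →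
      θ * θ = k + a1 * θ - c2 * θ := by
    intro v θ hv0 hv hJv hKv
    have := hAAv v θ hv hJv
    rw [hKv, smul_zero, sub_zero] at this
    exact aux_smul hv0 this
  have hcase : ∀ θ ∈ spectrum ℝ A, θ ≠ k → θ = -1 ∨ θ * θ = k + a1 * θ - c2 * θ := by
    intro θ hθ hne
    obtain ⟨v, hv0, hv⟩ := (aux_spec A θ).1 hθ
    by_cases h : θ = -1
    · exact Or.inl h
    · have hJv := hAJv v θ hv hne
      exact Or.inr (hquad v θ hv0 hv hJv (hAKv v θ hv hJv h))
  have e1 := hcase θ₁ (by rw [hspec]; simp) (by linarith)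
  have e2 := hcase θ₂ (by rw [hspec]; simp) (by linarith)
  have e3 := hcase θ₃ (by rw [hspec]; simp) (by linarith)
  have vieta : ∀ x y : ℝ, x ≠ y → x * x = k + a1 * x - c2 * x → y * y = k + a1 * y - c2 * y →
      x + y = a1 - c2 ∧ x * y = -k ∧ (-1 - x) * (-1 - y) < 0 := by
    intro x y hxy hx hy
    have hs : x + y = a1 - c2 := by
      have : (x - y) * (x + y - (a1 - c2)) = 0 := by linear_combination hx - hy
      rcases mul_eq_zero.1 this with h | h
      · exact absurd (sub_eq_zero.1 h) hxy
      · linarith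
    have hpr : x * y = -k := by
      have : y = a1 - c2 - x := by linarith
      subst this; linarith
    refine ⟨hs, hpr, ?_⟩
    have : (-1 - x) * (-1 - y) = 1 + (x + y) + x * y := by ring
    rw [this, hs, hpr]; linarith
  have key : θ₂ = -1 ∧ θ₁ * θ₁ = k + a1 * θ₁ - c2 * θ₁ ∧ θ₃ * θ₃ = k + a1 * θ₃ - c2 * θ₃ := by
    by_cases t2 : θ₂ = -1
    · refine ⟨t2, ?_, ?_⟩
      · exact e1.resolve_left (by linarith)
      · exact e3.resolve_left (by linarith)
    · exfalso
      have q2 := e2.resolve_left t2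
      rcases e1 with t1 | q1
      · have q3 := e3.resolve_left (by linarith)
        have := (vieta θ₂ θ₃ (by linarith) q2 q3).2.2
        nlinarith
      · have v12 := vieta θ₁ θ₂ (by linarith) q1 q2
        rcases e3 with t3 | q3
        · nlinarith [v12.2.2]
        · have v13 := vieta θ₁ θ₃ (by linarith) q1 q3
          linarith [v12.1, v13.1]
  obtain ⟨t2, q1, q3⟩ := key
  obtain ⟨vs, vp, -⟩ := vieta θ₁ θ₃ (by linarith) q1 q3
  have hθ3 : -(k + 1) < θ₃ := by
    by_contra hcon
    push Not at hcon
    have e : (-(k+1) - θ₁) * (-(k+1) - θ₃) = (k+1)^2 + (k+1) * (a1 - c2) - k := by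
      rw [← vs]; linear_combination vp
    have : (k+1)^2 + (k+1) * (a1 - c2) - k > 0 := by nlinarith
    nlinarith
  have hS : spectrum ℝ D = {(1 + p) * n - p * k + p ^ 2 * r - s, -p * θ₁ - s,
      p + p ^ 2 * r - s, -p * θ₃ - s} := by
    ext μ
    rw [aux_spec]
    constructor
    · rintro ⟨v, hv0, hv⟩
      by_cases hJv : J *ᵥ v = 0
      · by_cases hKv : K *ᵥ v = 0
        · have hA : A *ᵥ v = (-(μ + s) / p) • v := by
            have : p • (A *ᵥ v) = (-(μ + s)) • v := by
              rw [hD] at hv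
              simp only [add_mulVec, sub_mulVec, smul_mulVec, one_mulVec, hKv, hJv] at hv
              linear_combination (norm := module) (-1 : ℝ) • hv
            rw [div_eq_inv_mul, mul_smul, ← this, smul_smul, inv_mul_cancel₀ hp.ne', one_smul]
          have hq := hquad v _ hv0 hA hJv hKv
          set θ := -(μ + s) / p with hθ
          have hμ : μ = - p * θ - s := by rw [hθ]; field_simp; ring
          have : (θ - θ₁) * (θ - θ₃) = 0 := by
            linear_combination hq - θ * vs + vp
          rcases mul_eq_zero.1 this with h | h
          · have : θ = θ₁ := by linarith
            rw [hμ, this]; simp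
          · have : θ = θ₃ := by linarith
            rw [hμ, this]; simp
        · have h : (K * D) *ᵥ v = μ • (K *ᵥ v) := by rw [← mulVec_mulVec, hv, mulVec_smul]
          have h' : (K * D) *ᵥ v = (p + p ^ 2 * r - s) • (K *ᵥ v) := by
            rw [hD]
            simp only [mul_add, mul_sub, mul_smul_comm, hKJ, hKA, hKK, mul_one, add_mulVec,
              sub_mulVec, smul_mulVec, hJv]
            module
          have := aux_smul hKv (h.symm.trans h')
          rw [this]; simp
      · have h : (J * D) *ᵥ v = μ • (J *ᵥ v) := by rw [← mulVec_mulVec, hv, mulVec_smul]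
        have h' : (J * D) *ᵥ v = ((1 + p) * n - p * k + p ^ 2 * r - s) • (J *ᵥ v) := by
          rw [hD]
          simp only [mul_add, mul_sub, mul_smul_comm, hJJ, hJA, hJK, mul_one, add_mulVec,
              sub_mulVec, smul_mulVec]
          module
        have := aux_smul hJv (h.symm.trans h')
        rw [this]; simp
    · have hroot : ∀ θ ∈ spectrum ℝ A, θ ≠ k → θ ≠ -1 →
          ∃ v : V → ℝ, v ≠ 0 ∧ D *ᵥ v = (-p * θ - s) • v := by
        intro θ hθ hne hne'
        obtain ⟨v, hv0, hv⟩ := (aux_spec A θ).1 hθ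
        have hJv := hAJv v θ hv hne
        have hKv := hAKv v θ hv hJv hne'
        refine ⟨v, hv0, ?_⟩
        rw [hD]
        simp only [add_mulVec, sub_mulVec, smul_mulVec, one_mulVec, hKv, hJv, hv]
        module
      rintro (rfl | rfl | rfl | rfl)
      · obtain ⟨x⟩ := ‹Nonempty V›
        refine ⟨J *ᵥ Pi.single x 1, ?_, ?_⟩
        · intro h0
          have := congrFun h0 x
          simp [hJ] at this
        · rw [mulVec_mulVec, ← smul_mulVec]
          congr 1
          rw [hD]
          simp only [add_mul, sub_mul, smul_mul_assoc, hJJ, hAJ, hKJ, one_mul]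
          module
      · exact hroot θ₁ (by rw [hspec]; simp) (by linarith) (by linarith)
      · obtain ⟨v, hv0, hv⟩ := (aux_spec A θ₂).1 (by rw [hspec]; simp)
        have hJv := hAJv v θ₂ hv (by linarith)
        have hK := hAAv v θ₂ hv hJv
        rw [t2] at hK hv
        have hK1 : c2 • (K *ᵥ v) = (b1 + c2) • v := by
          have : b1 = k - 1 - a1 := by linarith
          rw [this]
          linear_combination (norm := module) (1 : ℝ) • hK
        have hK2 : K *ᵥ v = ((b1 + c2) / c2) • v := by
          rw [div_eq_inv_mul, mul_smul, ← hK1, smul_smul, inv_mul_cancel₀ (by linarith), one_smul]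
        set l := (b1 + c2) / c2 with hl
        have hlpos : 0 < l := by rw [hl]; apply div_pos <;> linarith
        have hlr : l = r := by
          have h : (K * K) *ᵥ v = (l * l) • v := by
            rw [← mulVec_mulVec, hK2, mulVec_smul, hK2, smul_smul]
          rw [hKK, smul_mulVec, hK2, smul_smul] at h
          have := aux_smul hv0 h
          exact (mul_right_cancel₀ hlpos.ne' this).symm
        rw [hlr] at hK2
        refine ⟨v, hv0, ?_⟩
        rw [hD]
        simp only [add_mulVec, sub_mulVec, smul_mulVec, one_mulVec, hK2, hJv, hv]
        module
      · exact hroot θ₃ (by rw [hspec]; simp) (by linarith) (by linarith)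
  have hn2 : 2 * (k + 1) ≤ n := by rw [hn]; nlinarith
  have hpp : 0 < p ^ 2 * r := by positivity
  have l1 : -p * θ₁ - s < p + p ^ 2 * r - s := by nlinarith
  have l2 : -p * θ₁ - s < -p * θ₃ - s := by nlinarith
  have hpn : p * (2 * (k + 1)) ≤ p * n := mul_le_mul_of_nonneg_left hn2 hp.le
  have hpk : 0 < p * k := by apply mul_pos hp; linarith
  have l3 : -p * θ₃ - s < (1 + p) * n - p * k + p ^ 2 * r - s := by
    have : p * (-(k+1)) < p * θ₃ := mul_lt_mul_of_pos_left hθ3 hp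
    nlinarith
  have l4 : p + p ^ 2 * r - s < (1 + p) * n - p * k + p ^ 2 * r - s := by nlinarith
  have hiff : θ₃ = - r * p - 1 ↔ p + p ^ 2 * r - s = -p * θ₃ - s := by
    constructor
    · rintro rfl; ring
    · intro h
      have : p * (θ₃ - (- r * p - 1)) = 0 := by linear_combination h
      rcases mul_eq_zero.1 this with h | h
      · exact absurd h hp.ne'
      · linarith
  rw [hiff, hS]
  constructor
  · intro h
    by_contra hne
    rw [Set.ncard_insert_of_notMem, Set.ncard_insert_of_notMem, Set.ncard_pair hne] at h
    · omega
    · simp only [Set.mem_insert_iff, Set.mem_singleton_iff, not_or]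
      exact ⟨l1.ne, l2.ne⟩
    · simp only [Set.mem_insert_iff, Set.mem_singleton_iff, not_or]
      exact ⟨(l2.trans l3).ne', l4.ne', l3.ne'⟩
  · intro h
    rw [h, Set.pair_eq_singleton, Set.ncard_insert_of_notMem, Set.ncard_pair l2.ne]
    simp only [Set.mem_insert_iff, Set.mem_singleton_iff, not_or]
    exact ⟨(l2.trans l3).ne', l3.ne'⟩

/-- Proposition 3.10(1): an antipodal distance-regular graph of diameter
3 which is an antipodal `r`-cover, with distinct adjacency eigenvalues `k > θ₁ > θ₂ > θ₃`,
has exactly three distinct `q`-distance eigenvalues for `q > 0` if and only if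
`θ₃ = −r/q − 1`. -/
theorem stmt14 (G : SimpleGraph V) (b c : ℕ → ℕ) (r : ℕ) (hG : IsDRG G 3 b c)
    (hcov : IsAntipodalCover G 3 r)
    (θ₁ θ₂ θ₃ : ℝ) (h1 : (b 0 : ℝ) > θ₁) (h2 : θ₁ > θ₂) (h3 : θ₂ > θ₃)
    (hspec : spectrum ℝ (distM G 1) = ({(b 0 : ℝ), θ₁, θ₂, θ₃} : Set ℝ))
    (q : ℝ) (hq : 0 < q) :
    (spectrum ℝ (qDist G 3 q)).ncard = 3 ↔ θ₃ = -(r : ℝ) / q - 1 := by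
  classical
  obtain ⟨hc, hdiam, ⟨x₀, y₀, hxy₀⟩, hc1, hreg⟩ := hG
  obtain ⟨hanti, hr⟩ := hcov
  have : Nonempty V := ⟨x₀⟩
  have dc : ∀ x y, G.dist x y = G.dist y x := fun x y => SimpleGraph.dist_comm
  have d1 : ∀ x y, G.Adj x y ↔ G.dist x y = 1 := fun x y => SimpleGraph.dist_eq_one_iff_adj.symm
  have d0 : ∀ x y, G.dist x y = 0 ↔ x = y := fun x y => hc.dist_eq_zero_iff
  have tri : ∀ x y z, G.dist x z ≤ G.dist x y + G.dist y z := fun x y z => hc.dist_triangle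
  -- counting facts
  have deg : ∀ y, ∑ z, (if G.dist y z = 1 then (1:ℝ) else 0) = b 0 := by
    intro y
    have := (hreg 0 (by norm_num) y y (by simp)).2
    rw [← this, aux_count]
    simp only [d1, zero_add, and_self]
  obtain ⟨u₀, hu₀, hxu₀⟩ := aux_pred G hc 2 x₀ y₀ hxy₀
  obtain ⟨w₀, hw₀, hxw₀⟩ := aux_pred G hc 1 x₀ u₀ hxu₀
  have uniq3 : ∀ x y z z', G.Adj y z → G.Adj y z' → G.dist x z = 3 → G.dist x z' = 3 → z = z' := by
    intro x y z z' hz hz' e e'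
    rcases hanti x z z' e e' with h | h
    · exact h
    · have := tri z y z'
      rw [d1] at hz hz'
      rw [dc z y] at this
      omega
  have hb2 : ∀ x y, G.dist x y = 2 → ∃ z, ∀ w, (G.Adj y w ∧ G.dist x w = 3) ↔ w = z := by
    intro x y hxy
    have e1 := (hreg 2 (by norm_num) x₀ u₀ hxu₀).2
    have e2 := (hreg 2 (by norm_num) x y hxy).2
    rw [← e1] at e2
    have : ({z : V | G.Adj u₀ z ∧ G.dist x₀ z = 2 + 1} : Set V).ncard ≠ 0 := by
      rw [aux_ncard]
      exact ⟨y₀, hu₀.symm, hxy₀⟩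
    rw [← e2, aux_ncard] at this
    obtain ⟨z, hz, hz'⟩ := this
    refine ⟨z, fun w => ⟨fun h => uniq3 x y w z h.1 hz h.2 hz', ?_⟩⟩
    rintro rfl; exact ⟨hz, hz'⟩
  have hcn2 := (hreg 2 (by norm_num) x₀ u₀ hxu₀).1
  have hc2 : 1 ≤ c 2 := by
    rw [← hcn2, Nat.one_le_iff_ne_zero, aux_ncard]
    exact ⟨w₀, hw₀, hxw₀⟩
  have hc2k : c 2 ≤ b 0 := by
    rw [← hcn2, ← (hreg 0 (by norm_num) u₀ u₀ (by simp)).2]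
    apply Set.ncard_le_ncard _ (Set.toFinite _)
    rintro z ⟨hz, -⟩
    exact ⟨hz, (d1 _ _).1 hz⟩
  have ha1 : ∀ x y, G.dist x y = 1 →
      ∑ z, (if G.dist x z = 1 ∧ G.dist z y = 1 then (1:ℝ) else 0) = b 0 - 1 - b 1 := by
    intro x y hxy
    obtain ⟨e1, e2⟩ := hreg 1 (by norm_num) x y hxy
    rw [hc1] at e1
    have e1' : ∑ z, (if G.Adj y z ∧ G.dist x z = 1 - 1 then (1:ℝ) else 0) = 1 := by
      rw [aux_count, e1]; simp
    have e2' : ∑ z, (if G.Adj y z ∧ G.dist x z = 1 + 1 then (1:ℝ) else 0) = b 1 := by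
      rw [aux_count, e2]
    trans (∑ z, (if G.dist y z = 1 then (1:ℝ) else 0))
      - (∑ z, (if G.Adj y z ∧ G.dist x z = 1 - 1 then (1:ℝ) else 0))
      - (∑ z, (if G.Adj y z ∧ G.dist x z = 1 + 1 then (1:ℝ) else 0))
    swap
    · rw [deg, e1', e2']
    rw [← Finset.sum_sub_distrib, ← Finset.sum_sub_distrib]
    refine Finset.sum_congr rfl fun z _ => ?_
    simp only [d1]
    rw [dc z y]
    by_cases hz : G.dist y z = 1
    · have := tri x y z
      have h012 : G.dist x z = 0 ∨ G.dist x z = 1 ∨ G.dist x z = 2 := by omega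
      rcases h012 with h | h | h <;> simp [hz, h]
    · simp [hz]
  have ha1nn : (0:ℝ) ≤ b 0 - 1 - b 1 := by
    rw [← ha1 x₀ w₀ hxw₀]
    exact Finset.sum_nonneg fun z _ => by split_ifs <;> norm_num
  -- matrices
  set A := distM G 1 with hA
  set J : Matrix V V ℝ := Matrix.of fun _ _ => (1:ℝ) with hJ
  set K : Matrix V V ℝ := 1 + distM G 3 with hK
  have Kap : ∀ x y, K x y = if x = y ∨ G.dist x y = 3 then (1:ℝ) else 0 := by
    intro x y
    simp only [hK, distM, Matrix.add_apply, one_apply, of_apply]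
    by_cases h : x = y
    · subst h; simp
    · simp [h]
  have Aap : ∀ x y, A x y = if G.dist x y = 1 then (1:ℝ) else 0 := fun x y => rfl
  have Asym : Aᵀ = A := by ext x y; simp [Aap, dc x y]
  have Ksym : Kᵀ = K := by ext x y; simp [Kap, dc x y, eq_comm]
  have Jsym : Jᵀ = J := by ext x y; simp [hJ]
  have hAJ : A * J = (b 0 : ℝ) • J := by
    ext x y
    simp [mul_apply, hJ, Aap, ← deg x]
  have hJA : J * A = (b 0 : ℝ) • J := by
    have := congrArg transpose hAJ
    simpa [transpose_mul, Asym, Jsym] using this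
  have hKJ : K * J = (r : ℝ) • J := by
    ext x y
    simp only [mul_apply, hJ, Kap, of_apply, mul_one, Matrix.smul_apply, smul_eq_mul]
    rw [aux_count, ← hr x]
    simp only [eq_comm (a := x)]
  have hJK : J * K = (r : ℝ) • J := by
    have := congrArg transpose hKJ
    simpa [transpose_mul, Ksym, Jsym] using this
  have hJJ : J * J = (Fintype.card V : ℝ) • J := by
    ext x y
    simp [mul_apply, hJ]
  have hAK : A * K = J - K := by
    ext x y
    have : (A * K) x y = ∑ z, (if G.dist x z = 1 ∧ (z = y ∨ G.dist z y = 3) then (1:ℝ) else 0) := by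
      simp only [mul_apply, Aap, Kap]
      refine Finset.sum_congr rfl fun z _ => ?_
      by_cases h : G.dist x z = 1 <;> simp [h]
    rw [this, Matrix.sub_apply, Kap]
    simp only [hJ, of_apply]
    have hd := hdiam x y
    have h0123 : G.dist x y = 0 ∨ G.dist x y = 1 ∨ G.dist x y = 2 ∨ G.dist x y = 3 := by omega
    rcases h0123 with h | h | h | h
    · have hxy := (d0 x y).1 h
      subst hxy
      simp only [true_or, if_true, sub_self]
      refine Finset.sum_eq_zero fun z _ => if_neg ?_
      rintro ⟨hz, rfl | hz'⟩
      · omega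
      · rw [dc] at hz'; omega
    · have hne : x ≠ y := by rintro rfl; simp at h
      rw [if_neg (by simp [hne, h]), sub_zero, Finset.sum_eq_single y]
      · simp [h]
      · intro z _ hz
        refine if_neg ?_
        rintro ⟨hz1, rfl | hz'⟩
        · exact hz rfl
        · have := tri z x y
          rw [dc z x] at this; omega
      · simp
    · have hne : x ≠ y := by rintro rfl; simp at h
      rw [if_neg (by simp [hne, h]), sub_zero]
      obtain ⟨z, hz⟩ := hb2 y x (by rw [dc]; exact h)
      rw [Finset.sum_eq_single z]
      · obtain ⟨e1, e2⟩ := (hz z).2 rfl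
        rw [if_pos ⟨(d1 _ _).1 e1, Or.inr (by rw [dc]; exact e2)⟩]
      · intro w _ hw
        refine if_neg ?_
        rintro ⟨hw1, rfl | hw'⟩
        · omega
        · exact hw ((hz w).1 ⟨(d1 _ _).2 hw1, by rw [dc]; exact hw'⟩)
      · simp
    · rw [if_pos (Or.inr h), sub_self]
      refine Finset.sum_eq_zero fun z _ => if_neg ?_
      rintro ⟨hz, rfl | hz'⟩
      · omega
      · rcases hanti y x z (by rw [dc]; exact h) (by rw [dc]; exact hz') with e | e
        · subst e; simp at hz
        · omega
  have hKA : K * A = J - K := by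
    have := congrArg transpose hAK
    simpa [transpose_mul, Ksym, Asym, Jsym] using this
  have hKK : K * K = (r : ℝ) • K := by
    ext x y
    have hrel : ∀ z, (x = z ∨ G.dist x z = 3) → ((z = y ∨ G.dist z y = 3) ↔ (x = y ∨ G.dist x y = 3)) := by
      intro z hz
      rcases hz with rfl | hz
      · rfl
      · constructor
        · rintro (rfl | h)
          · exact Or.inr hz
          · exact hanti z x y (by rw [dc]; exact hz) h
        · rintro (rfl | h)
          · exact Or.inr (by rw [dc]; exact hz)
          · exact hanti x z y hz h
    have : (K * K) x y = ∑ z, K x z * K x y := by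
      rw [mul_apply]
      refine Finset.sum_congr rfl fun z _ => ?_
      rw [Kap x z]
      by_cases h : x = z ∨ G.dist x z = 3
      · rw [if_pos h, one_mul, one_mul, Kap, Kap]
        simp only [hrel z h]
      · rw [if_neg h]; simp
    rw [this, ← Finset.sum_mul, Matrix.smul_apply, smul_eq_mul]
    congr 1
    have := congrFun (congrFun hKJ x) x
    simpa [mul_apply, hJ] using this
  have hA2 : ∀ x y, (J - A - K) x y = if G.dist x y = 2 then (1:ℝ) else 0 := by
    intro x y
    have hd := hdiam x y
    rw [Matrix.sub_apply, Matrix.sub_apply, Aap, Kap]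
    simp only [← d0 x y, hJ, of_apply]
    have h0123 : G.dist x y = 0 ∨ G.dist x y = 1 ∨ G.dist x y = 2 ∨ G.dist x y = 3 := by omega
    rcases h0123 with h | h | h | h <;> simp [h]
  have hAA : A * A = (b 0 : ℝ) • (1 : Matrix V V ℝ) + ((b 0 : ℝ) - 1 - b 1) • A
      + (c 2 : ℝ) • (J - A - K) := by
    ext x y
    have e : (A * A) x y = ∑ z, (if G.dist x z = 1 ∧ G.dist z y = 1 then (1:ℝ) else 0) := by
      simp only [mul_apply, Aap]
      refine Finset.sum_congr rfl fun z _ => ?_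
      by_cases h : G.dist x z = 1 <;> simp [h]
    rw [Matrix.add_apply, Matrix.add_apply, Matrix.smul_apply, Matrix.smul_apply, Matrix.smul_apply, hA2, e, Aap, one_apply]
    simp only [← d0 x y]
    have hd := hdiam x y
    have h0123 : G.dist x y = 0 ∨ G.dist x y = 1 ∨ G.dist x y = 2 ∨ G.dist x y = 3 := by omega
    rcases h0123 with h | h | h | h
    · have hxy := (d0 x y).1 h
      subst hxy
      rw [← deg x]
      simp [dc _ x]
    · rw [ha1 x y h]; simp [h]
    · have := (hreg 2 (by norm_num) x y h).1
      rw [aux_count]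
      have hs : ({z | G.dist x z = 1 ∧ G.dist z y = 1} : Set V)
          = {z : V | G.Adj y z ∧ G.dist x z = 2 - 1} := by
        ext z
        simp only [Set.mem_setOf_eq, d1, dc z y]
        exact and_comm
      rw [hs, this]
      simp [h]
    · simp only [h]
      rw [Finset.sum_eq_zero]
      · simp
      · intro z _
        refine if_neg ?_
        have := tri x z y
        omega
  have hD : qDist G 3 q = (1 + 1 / q) • J - (1 / q) • A + (1 / q) ^ 2 • K
      - (1 + 1 / q + (1 / q) ^ 2) • (1 : Matrix V V ℝ) := by
    have e2 : distM G 2 = J - A - K := by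
      ext x y; rw [hA2]; rfl
    have e3 : distM G 3 = K - 1 := by rw [hK]; abel
    have : Finset.Icc 1 3 = ({1, 2, 3} : Finset ℕ) := by decide
    rw [qDist, this]
    rw [Finset.sum_insert (by decide), Finset.sum_insert (by decide), Finset.sum_singleton, e2, e3, ← hA]
    simp only [Finset.sum_range_succ, Finset.sum_range_zero]
    module
  have hn : (Fintype.card V : ℝ) = r * (b 0 + 1) := by
    have e : A * K * J = (J - K) * J := by rw [hAK]
    rw [mul_assoc, hKJ, mul_smul_comm, hAJ, sub_mul, hJJ, hKJ] at e
    have := congrFun (congrFun e x₀) x₀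
    simp [hJ] at this
    linarith
  have hr2 : (2:ℝ) ≤ r := by
    have : 2 ≤ r := by
      rw [← hr x₀, ← Set.ncard_pair (a := x₀) (b := y₀) (by rintro rfl; simp at hxy₀)]
      apply Set.ncard_le_ncard _ (Set.toFinite _)
      rintro z (rfl | rfl)
      · exact Or.inl rfl
      · exact Or.inr hxy₀
    exact_mod_cast this
  have := aux_core A K J (qDist G 3 q) (b 0) r ((b 0 : ℝ) - 1 - b 1) (c 2) (Fintype.card V) (b 1)
    (1 / q) (1 + 1 / q + (1 / q) ^ 2) hJ hAJ hJA hJJ hKJ hJK hAK hKA hKK hAA hD hn hr2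
    (by positivity) ha1nn (by positivity) (by ring) (by exact_mod_cast hc2) (by exact_mod_cast hc2k)
    θ₁ θ₂ θ₃ h1 h2 h3 hspec
  rw [this]
  have : -(r:ℝ) * (1 / q) = -(r:ℝ) / q := by ring
  rw [this]
end

section
/- Let G be an antipodal distance-regular graph of diameter 3 which is an antipodal r-cover, with distinct adjacency eigenvalues k > θ₁ > θ₂ > θ₃. Then the distance matrix 𝔻₁ of G has exactly three distinct eigenvalues if and only if θ₃ = −r − 1. -/
open Matrix

variable {V : Type*} [Fintype V] [DecidableEq V]

open Polynomial in
theorem spec_part (A J K D : Matrix V V ℝ) (k b c r θ₁ θ₂ θ₃ : ℝ) (hA : IsSelfAdjoint A)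
    (hAA : A * A = k • (1 : Matrix V V ℝ) + (k - 1 - b) • A + c • (J - K - A))
    (hAK : A * K = J - K) (hAJ : A * J = k • J)
    (hD : D = (2:ℝ) • J - A - (3:ℝ) • (1 : Matrix V V ℝ) + K)
    (hb : b = c * (r - 1)) (hc : 0 < c) (hk : 0 < k) (hr : 1 ≤ r) (hck : c ≤ k) (hbk : b + 1 ≤ k)
    (h1 : k > θ₁) (h2 : θ₁ > θ₂) (h3 : θ₂ > θ₃)
    (hspec : spectrum ℝ A = ({k, θ₁, θ₂, θ₃} : Set ℝ)) :
    (spectrum ℝ D).ncard = 3 ↔ θ₃ = - r - 1 := by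
  obtain ⟨s, hs⟩ : ∃ s, s = k - 1 - c * r := ⟨_, rfl⟩
  have hs' : k - 1 - b = s + c := by rw [hs, hb]; ring
  rw [hs'] at hAA
  obtain ⟨Q, hQ⟩ : ∃ Q : ℝ[X], Q = C k + C s * X - X ^ 2 := ⟨_, rfl⟩
  have hQA : aeval A Q = c • (K - J) := by
    rw [hQ]
    simp only [map_add, map_sub, map_mul, aeval_C, aeval_X, map_pow, pow_two, hAA,
      Algebra.algebraMap_eq_smul_one]
    simp only [smul_mul_assoc, one_mul]
    module
  have hJ : aeval A (C (-(1/(c*k))) * (X + 1) * Q) = J := by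
    simp only [map_mul, map_add, hQA, aeval_C, aeval_X, map_one, Algebra.algebraMap_eq_smul_one,
      mul_smul_comm, smul_mul_assoc, one_mul, mul_sub, add_mul, hAK, hAJ]
    match_scalars <;> field_simp <;> ring
  have hDp : aeval A (C 3 * (C (-(1/(c*k))) * (X + 1) * Q) + C (1/c) * Q - X - C 3) = D := by
    rw [map_sub, map_sub, map_add, map_mul, hJ, map_mul, hQA, hD]
    simp only [aeval_C, aeval_X, Algebra.algebraMap_eq_smul_one,
      mul_smul_comm, smul_mul_assoc, one_mul]
    match_scalars <;> field_simp <;> ring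
  have h0 : aeval A ((X - C k) * ((C (-(1/(c*k))) * (X + 1) * Q))) = 0 := by
    rw [map_mul, hJ]
    simp only [map_sub, aeval_C, aeval_X, Algebra.algebraMap_eq_smul_one, sub_mul, hAJ,
      smul_mul_assoc, one_mul, sub_self]
  have hq : ∀ x ∈ spectrum ℝ A, x ≠ k → (x + 1) * (k + s * x - x ^ 2) = 0 := by
    intro x hx hxk
    have := cfc_map_spectrum (R := ℝ) (fun y => eval y ((X - C k) * ((C (-(1/(c*k))) * (X + 1) * Q)))) A
    rw [cfc_polynomial _ _ hA, h0] at this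
    have hx2 := this.symm ▸ Set.mem_image_of_mem _ hx
    have hne : Nontrivial (Matrix V V ℝ) := by
      by_contra hh
      rw [not_nontrivial_iff_subsingleton] at hh
      simp [spectrum.of_subsingleton] at hx
    rw [spectrum.zero_eq] at hx2
    simp only [hQ, eval_mul, eval_sub, eval_X, eval_C, eval_add, eval_one, eval_pow,
      Set.mem_singleton_iff] at hx2
    rcases mul_eq_zero.1 hx2 with h | h
    · exact absurd (sub_eq_zero.1 h) hxk
    · rw [mul_assoc] at h
      rcases mul_eq_zero.1 h with h | h
      · exfalso
        have : 0 < 1/(c*k) := by positivity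
        linarith
      · exact h
  have e1 := hq θ₁ (by simp [hspec]) (by linarith)
  have e2 := hq θ₂ (by simp [hspec]) (by linarith)
  have e3 := hq θ₃ (by simp [hspec]) (by linarith)
  have hcr : 0 < c * r := by positivity
  have vieta : ∀ x y : ℝ, x ≠ y → k + s * x - x ^ 2 = 0 → k + s * y - y ^ 2 = 0 →
      s = x + y ∧ k = - (x * y) := by
    intro x y hxy hx hy
    have : s = x + y := by
      have : (x - y) * (s - x - y) = 0 := by linear_combination hx - hy
      rcases mul_eq_zero.1 this with h | h
      · exact absurd (sub_eq_zero.1 h) hxy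
      · linarith
    exact ⟨this, by subst this; linarith⟩
  have ht2 : θ₂ = -1 := by
    rcases mul_eq_zero.1 e2 with h | f2
    · linarith
    exfalso
    rcases mul_eq_zero.1 e1 with h | f1
    · rcases mul_eq_zero.1 e3 with h' | f3
      · linarith
      obtain ⟨-, h5⟩ := vieta _ _ h3.ne' f2 f3
      nlinarith
    · obtain ⟨h4, h5⟩ := vieta _ _ h2.ne' f1 f2
      rcases mul_eq_zero.1 e3 with h' | f3
      · nlinarith
      obtain ⟨h6, -⟩ := vieta _ _ h3.ne' f2 f3
      linarith
  have f1 : k + s * θ₁ - θ₁ ^ 2 = 0 := (mul_eq_zero.1 e1).resolve_left (by linarith)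
  have f3 : k + s * θ₃ - θ₃ ^ 2 = 0 := (mul_eq_zero.1 e3).resolve_left (by linarith)
  obtain ⟨hsum, hprod⟩ := vieta θ₁ θ₃ (by linarith) f1 f3
  have hpos : 0 < θ₁ := by
    by_contra h
    nlinarith
  have hsD : spectrum ℝ D = {2 * (k + 1) * r - k - 3 + r, -θ₁ - 3, r - 2, -θ₃ - 3} := by
    have := cfc_map_spectrum (R := ℝ) (fun y => eval y (C 3 * (C (-(1/(c*k))) * (X + 1) * Q) + C (1/c) * Q - X - C 3)) A
    rw [cfc_polynomial _ _ hA, hDp] at this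
    rw [this, hspec]
    simp only [Set.image_insert_eq, Set.image_singleton, hQ, eval_mul, eval_sub, eval_X, eval_C,
      eval_add, eval_one, eval_pow, f1, f3, ht2]
    have a1 : 3 * (-(1 / (c * k)) * (k + 1) * (k + s * k - k ^ 2)) + 1 / c * (k + s * k - k ^ 2) - k - 3
        = 2 * (k + 1) * r - k - 3 + r := by
      rw [hs]; field_simp; ring
    have a2 : 3 * (-(1 / (c * k)) * (-1 + 1) * (k + s * -1 - (-1) ^ 2)) + 1 / c * (k + s * -1 - (-1) ^ 2) - -1 - 3
        = r - 2 := by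
      rw [hs]; field_simp; ring
    rw [a1, a2]
    simp
  have hθ3 : -θ₃ < k + 3 := by
    by_contra h
    have : -k ≤ s := by linarith
    nlinarith
  have hkr : k ≤ k * r := by nlinarith
  have n1 : 2 * (k + 1) * r - k - 3 + r ≠ -θ₁ - 3 := by intro h; nlinarith
  have n2 : 2 * (k + 1) * r - k - 3 + r ≠ r - 2 := by intro h; nlinarith
  have n3 : 2 * (k + 1) * r - k - 3 + r ≠ -θ₃ - 3 := by intro h; nlinarith
  have n4 : -θ₁ - 3 ≠ r - 2 := by intro h; linarith
  have n5 : -θ₁ - 3 ≠ -θ₃ - 3 := by intro h; linarith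
  rw [hsD]
  constructor
  · intro h
    by_contra hne
    have n6 : r - 2 ≠ -θ₃ - 3 := by intro h; apply hne; linarith
    rw [Set.ncard_insert_of_notMem (by simp [n1, n2, n3]), Set.ncard_insert_of_notMem (by simp [n4, n5]),
      Set.ncard_pair n6] at h
    omega
  · intro h
    have n6 : r - 2 = -θ₃ - 3 := by linarith
    rw [← n6, Set.pair_eq_singleton, Set.ncard_insert_of_notMem (by simp [n1, n2]), Set.ncard_pair n4]

theorem cnt (P : V → Prop) [DecidablePred P] :
    (({z : V | P z} : Set V).ncard : ℝ) = ∑ z, if P z then (1:ℝ) else 0 := by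
  rw [Finset.sum_boole, ← Set.ncard_coe_finset]
  simp

theorem comb_part (G : SimpleGraph V) (b c : ℕ → ℕ) (r : ℕ) (hG : IsDRG G 3 b c)
    (hcov : IsAntipodalCover G 3 r) :
    ∃ J K : Matrix V V ℝ,
    distM G 1 * distM G 1 = (b 0 : ℝ) • (1 : Matrix V V ℝ) + ((b 0 : ℝ) - 1 - b 1) • distM G 1
      + (c 2 : ℝ) • (J - K - distM G 1) ∧
    distM G 1 * K = J - K ∧ distM G 1 * J = (b 0 : ℝ) • J ∧
    qDist G 3 1 = (2:ℝ) • J - distM G 1 - (3:ℝ) • (1 : Matrix V V ℝ) + K ∧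
    (b 1 : ℝ) = c 2 * ((r : ℝ) - 1) ∧ (0 : ℝ) < c 2 ∧ (0 : ℝ) < b 0 ∧ (1 : ℝ) ≤ r ∧
    (c 2 : ℝ) ≤ b 0 ∧ (b 1 : ℝ) + 1 ≤ b 0 := by
  classical
  obtain ⟨hconn, hdiam, ⟨u, w, huw⟩, hc1, hreg⟩ := hG
  obtain ⟨hanti, hcl⟩ := hcov
  have hd0 : ∀ x y, G.dist x y = 0 ↔ x = y := fun x y => hconn.dist_eq_zero_iff
  have hadj : ∀ x y, G.dist x y = 1 ↔ G.Adj x y := fun x y => SimpleGraph.dist_eq_one_iff_adj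
  have hcm : ∀ x y, G.dist x y = G.dist y x := fun x y => SimpleGraph.dist_comm
  have htri : ∀ x y z, G.dist x z ≤ G.dist x y + G.dist y z := fun x y z => hconn.dist_triangle
  have hstep : ∀ x y z, G.Adj y z → G.dist x z ≤ G.dist x y + 1 ∧ G.dist x y ≤ G.dist x z + 1 := by
    intro x y z h
    have h1 := (hadj y z).2 h
    have h2 := htri x y z
    have h3 := htri x z y
    rw [hcm z y] at h3
    omega
  -- a path u - p - q - w
  obtain ⟨p, q, hup, hpq, hqw⟩ : ∃ p q, G.Adj u p ∧ G.Adj p q ∧ G.Adj q w := by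
    obtain ⟨W, hW⟩ := hconn.exists_walk_length_eq_dist u w
    rw [huw] at hW
    match W, hW with
    | .cons h1 (.cons h2 (.cons h3 .nil)), _ => exact ⟨_, _, h1, h2, h3⟩
  have dup : G.dist u p = 1 := (hadj _ _).2 hup
  have duq : G.dist u q = 2 := by
    have := hstep u p q hpq
    have := hstep u q w hqw
    omega
  -- real counting
  have hC : ∀ i ≤ 3, ∀ x y, G.dist x y = i →
      (∑ z, if G.Adj y z ∧ G.dist x z = i - 1 then (1:ℝ) else 0) = c i := by
    intro i hi x y h
    rw [← (hreg i hi x y h).1, cnt]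
  have hB : ∀ i ≤ 3, ∀ x y, G.dist x y = i →
      (∑ z, if G.Adj y z ∧ G.dist x z = i + 1 then (1:ℝ) else 0) = b i := by
    intro i hi x y h
    rw [← (hreg i hi x y h).2, cnt]
  have hk : ∀ y, (∑ z, if G.Adj y z then (1:ℝ) else 0) = b 0 := by
    intro y
    rw [← hB 0 (by norm_num) y y (by simp)]
    refine Finset.sum_congr rfl fun z _ => ?_
    simp [hadj]
  have ha1 : ∀ x y, G.dist x y = 1 →
      (∑ z, if G.Adj y z ∧ G.dist x z = 1 then (1:ℝ) else 0) = b 0 - 1 - b 1 := by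
    intro x y h
    have e1 := hC 1 (by norm_num) x y h
    have e2 := hB 1 (by norm_num) x y h
    have e3 := hk y
    have : (∑ z, if G.Adj y z then (1:ℝ) else 0) =
        (∑ z, if G.Adj y z ∧ G.dist x z = 1 - 1 then (1:ℝ) else 0) +
        (∑ z, if G.Adj y z ∧ G.dist x z = 1 then (1:ℝ) else 0) +
        (∑ z, if G.Adj y z ∧ G.dist x z = 1 + 1 then (1:ℝ) else 0) := by
      rw [← Finset.sum_add_distrib, ← Finset.sum_add_distrib]
      refine Finset.sum_congr rfl fun z _ => ?_
      by_cases hz : G.Adj y z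
      · have := hstep x y z hz
        have : G.dist x z = 0 ∨ G.dist x z = 1 ∨ G.dist x z = 2 := by omega
        rcases this with h | h | h <;> simp [hz, h]
      · simp [hz]
    rw [hc1] at e1
    push_cast at e1
    linarith
  have hb2le : ∀ x y, G.dist x y = 2 → ∀ z z', G.Adj y z → G.dist x z = 3 → G.Adj y z' →
      G.dist x z' = 3 → z = z' := by
    intro x y h z z' h1 h2 h3 h4
    rcases hanti x z z' h2 h4 with h | h
    · exact h
    · have := hstep z y z' h3
      have h5 := (hadj z y).2 h1.symm
      omega
  have hb2 : b 2 = 1 := by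
    rw [← (hreg 2 (by norm_num) u q duq).2, Set.ncard_eq_one]
    refine ⟨w, ?_⟩
    ext z
    simp only [Set.mem_ofPred_eq, Set.mem_singleton_iff]
    constructor
    · rintro ⟨h1, h2⟩
      exact hb2le u q duq _ _ h1 h2 hqw huw
    · rintro rfl
      exact ⟨hqw, huw⟩
  -- entries
  have eA : ∀ x y, distM G 1 x y = if G.Adj x y then (1:ℝ) else 0 := by
    intro x y; simp [distM, hadj]
  obtain ⟨J, hJ⟩ : ∃ J : Matrix V V ℝ, ∀ x y, J x y = 1 := ⟨Matrix.of fun _ _ => 1, fun _ _ => rfl⟩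
  obtain ⟨K, hK⟩ : ∃ K : Matrix V V ℝ, ∀ x y, K x y =
    (if x = y then (1:ℝ) else 0) + (if G.dist x y = 3 then (1:ℝ) else 0) :=
    ⟨Matrix.of fun x y => (if x = y then (1:ℝ) else 0) + (if G.dist x y = 3 then (1:ℝ) else 0),
      fun _ _ => rfl⟩
  have cases4 : ∀ x y, G.dist x y = 0 ∨ G.dist x y = 1 ∨ G.dist x y = 2 ∨ G.dist x y = 3 := by
    intro x y; have := hdiam x y; omega
  have hAA : distM G 1 * distM G 1 = (b 0 : ℝ) • (1 : Matrix V V ℝ)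
      + ((b 0 : ℝ) - 1 - b 1) • distM G 1 + (c 2 : ℝ) • (J - K - distM G 1) := by
    ext x y
    have e : (distM G 1 * distM G 1) x y =
        ∑ z, if G.Adj y z ∧ G.dist x z = 1 then (1:ℝ) else 0 := by
      rw [Matrix.mul_apply]
      refine Finset.sum_congr rfl fun z _ => ?_
      rw [eA, eA]
      by_cases h1 : G.Adj x z <;> by_cases h2 : G.Adj y z <;> simp [h1, h2, hadj, G.adj_comm z y]
    rw [e]
    simp only [Matrix.add_apply, Matrix.smul_apply, Matrix.sub_apply, hJ, hK, Matrix.one_apply,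
      smul_eq_mul, eA, ← hadj x y, ← hd0 x y]
    rcases cases4 x y with h | h | h | h
    · rw [hB 0 (by norm_num) x y h]; simp [h]
    · rw [ha1 x y h]; simp [h]
    · rw [hC 2 (by norm_num) x y h]; simp [h]
    · rw [Finset.sum_eq_zero]
      · simp [h]
      intro z _
      refine if_neg ?_
      rintro ⟨h1, h2⟩
      have := hstep x y z h1
      omega
  have hAK : distM G 1 * K = J - K := by
    ext x y
    have e : (distM G 1 * K) x y = (if G.dist x y = 1 then (1:ℝ) else 0) +
        ∑ z, if G.Adj x z ∧ G.dist y z = 3 then (1:ℝ) else 0 := by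
      rw [Matrix.mul_apply]
      simp only [hK, mul_add, Finset.sum_add_distrib, eA, hadj]
      congr 1
      · simp
      · refine Finset.sum_congr rfl fun z _ => ?_
        rw [hcm z y]
        by_cases h1 : G.Adj x z <;> by_cases h2 : G.dist y z = 3 <;> simp [h1, h2]
    rw [e]
    simp only [Matrix.sub_apply, hJ, hK, ← hd0 x y]
    have hz : ∀ n, G.dist x y = n → n ≤ 1 →
        (∑ z, if G.Adj x z ∧ G.dist y z = 3 then (1:ℝ) else 0) = 0 := by
      intro n h hn
      refine Finset.sum_eq_zero fun z _ => if_neg ?_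
      rintro ⟨h1, h2⟩
      have := hstep y x z h1
      rw [hcm y x] at this
      omega
    rcases cases4 x y with h | h | h | h
    · rw [hz 0 h (by norm_num)]; simp [h]
    · rw [hz 1 h (by norm_num)]; simp [h]
    · have := hB 2 (by norm_num) y x (by rw [hcm]; exact h)
      norm_num [hb2] at this
      simp only [Finset.sum_boole]
      rw [this]; simp [h]
    · rw [Finset.sum_eq_zero]
      · simp [h]
      intro z _
      refine if_neg ?_
      rintro ⟨h1, h2⟩
      have h5 := (hadj x z).2 h1
      rcases hanti y x z (by rw [hcm]; exact h) h2 with h | h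
      · rw [h] at h1; exact G.irrefl h1
      · omega
  have hAJ : distM G 1 * J = (b 0 : ℝ) • J := by
    ext x y
    rw [Matrix.mul_apply]
    simp only [hJ, eA, mul_one, Matrix.smul_apply, smul_eq_mul, hk]
  have hr : (1:ℝ) ≤ r := by
    have : 0 < r := by
      rw [← hcl u, Set.ncard_pos]
      exact ⟨u, by simp⟩
    exact_mod_cast this
  have hkpos : (0:ℝ) < b 0 := by
    rw [← hk u]
    refine Finset.sum_pos' (fun z _ => by positivity) ⟨p, Finset.mem_univ _, by simp [hup]⟩
  have hc2 : (0:ℝ) < c 2 := by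
    rw [← hC 2 (by norm_num) u q duq]
    refine Finset.sum_pos' (fun z _ => by positivity)
      ⟨p, Finset.mem_univ _, by simp [hpq.symm, dup]⟩
  refine ⟨J, K, hAA, hAK, hAJ, ?_, ?_, hc2, hkpos, hr, ?_, ?_⟩
  · ext x y
    simp only [qDist, Matrix.add_apply, Matrix.smul_apply, Matrix.sub_apply, hJ, hK,
      Matrix.one_apply, Matrix.sum_apply, distM, Matrix.of_apply, ← hd0 x y]
    rw [show Finset.Icc 1 3 = {1, 2, 3} from rfl]
    rcases cases4 x y with h | h | h | h <;> simp [h] <;> norm_num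
  · -- row sums
    set e : V → ℝ := fun _ => 1
    have r1 : distM G 1 *ᵥ e = (b 0 : ℝ) • e := by
      ext x; simp only [Matrix.mulVec, dotProduct, e, eA, mul_one, hk]; simp
    have r2 : K *ᵥ e = (r : ℝ) • e := by
      ext x
      simp only [Matrix.mulVec, dotProduct, e, mul_one, Pi.smul_apply, smul_eq_mul]
      rw [← hcl x, cnt]
      refine Finset.sum_congr rfl fun z _ => ?_
      rw [hK]
      by_cases h1 : x = z
      · subst h1; simp
      · simp [h1, Ne.symm h1]
    have r3 : J *ᵥ e = (Fintype.card V : ℝ) • e := by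
      ext x; simp [Matrix.mulVec, dotProduct, e, hJ]
    have s1 := congrFun (congrArg (· *ᵥ e) hAK) u
    have s2 := congrFun (congrArg (· *ᵥ e) hAA) u
    simp only [← Matrix.mulVec_mulVec, Matrix.add_mulVec, Matrix.sub_mulVec, Matrix.smul_mulVec,
      Matrix.mulVec_smul, r1, r2, r3, Matrix.one_mulVec] at s1 s2
    simp [e] at s1 s2
    have : (b 0 : ℝ) * (b 1 - c 2 * (r - 1)) = 0 := by
      linear_combination s2 - (c 2 : ℝ) * s1
    rcases mul_eq_zero.1 this with h | h
    · linarith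
    · linarith
  · rw [← hC 2 (by norm_num) u q duq, ← hk q]
    refine Finset.sum_le_sum fun z _ => ?_
    by_cases h1 : G.Adj q z
    · by_cases h2 : G.dist u z = 2 - 1 <;> simp [h1, h2]
    · simp [h1]
  · have := ha1 u p dup
    have h0 : (0:ℝ) ≤ ∑ z, if G.Adj p z ∧ G.dist u z = 1 then (1:ℝ) else 0 :=
      Finset.sum_nonneg fun z _ => by positivity
    linarith

/-- Corollary 3.11: an antipodal distance-regular graph of diameter 3
which is an antipodal `r`-cover, with distinct adjacency eigenvalues `k > θ₁ > θ₂ > θ₃`,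
has exactly three distinct distance eigenvalues if and only if `θ₃ = −r − 1`. -/
theorem stmt16 (G : SimpleGraph V) (b c : ℕ → ℕ) (r : ℕ) (hG : IsDRG G 3 b c)
    (hcov : IsAntipodalCover G 3 r)
    (θ₁ θ₂ θ₃ : ℝ) (h1 : (b 0 : ℝ) > θ₁) (h2 : θ₁ > θ₂) (h3 : θ₂ > θ₃)
    (hspec : spectrum ℝ (distM G 1) = ({(b 0 : ℝ), θ₁, θ₂, θ₃} : Set ℝ)) :
    (spectrum ℝ (qDist G 3 1)).ncard = 3 ↔ θ₃ = -(r : ℝ) - 1 := by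
  obtain ⟨J, K, hAA, hAK, hAJ, hD, hb, hc, hk, hr, hck, hbk⟩ := comb_part G b c r hG hcov
  refine spec_part (distM G 1) J K _ _ _ _ _ θ₁ θ₂ θ₃ ?_ hAA hAK hAJ hD hb hc hk hr hck hbk h1 h2 h3 hspec
  ext x y
  have e : G.dist y x = G.dist x y := SimpleGraph.dist_comm
  have : star (distM G 1 y x) = distM G 1 x y := by
    simp only [distM, Matrix.of_apply, e]
    exact star_trivial _
  exact this
end

section
/- Let r ≥ 2 be an integer and let G be an antipodal distance-regular graph of diameter 3 on n vertices which is an antipodal r-cover and whose smallest adjacency eigenvalue equals −r − 1. Then n ≤ r⁶ + 3r⁵ + r⁴ − 4r³ − 4r². In particular, for each fixed r ≥ 2 there are only finitely many such graphs. -/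
open Matrix

variable {V : Type*} [Fintype V] [DecidableEq V]

lemma sum_ind_ncard {V : Type*} [Fintype V] (p : V → Prop) [DecidablePred p] :
    (∑ z, (if p z then (1:ℝ) else 0)) = (({z | p z} : Set V).ncard : ℝ) := by
  rw [Set.ncard_eq_toFinset_card']
  simp

lemma trace_idem_nat {V : Type*} [Fintype V] [DecidableEq V] (E : Matrix V V ℝ)
    (h : E * E = E) : ∃ m : ℕ, E.trace = m := by
  have he : IsIdempotentElem (Matrix.toLin' E) := by
    unfold IsIdempotentElem
    rw [Module.End.mul_eq_comp, ← Matrix.toLin'_mul, h]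
  refine ⟨Module.finrank ℝ (LinearMap.range (Matrix.toLin' E)), ?_⟩
  rw [← (LinearMap.IsIdempotentElem.isProj_range _ he).trace, Matrix.trace_toLin'_eq]

lemma arith_part (r k m : ℕ) (hr : 2 ≤ r)
    (h : (m:ℝ) * (k + ((r:ℝ)+1)^2) = ((r:ℝ)+1)^2 * (r - 1) * (k + 1)) :
    (k:ℝ) + ((r:ℝ)+1)^2 ≤ ((r:ℝ)+1)^2 * (r-1) * (r * (r+2)) := by
  have h' : (m:ℤ) * (k + ((r:ℤ)+1)^2) = ((r:ℤ)+1)^2 * (r - 1) * (k + 1) := by exact_mod_cast h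
  have hd : ((k:ℤ) + ((r:ℤ)+1)^2) ∣ ((r:ℤ)+1)^2 * (r-1) * (r * (r+2)) := by
    refine ⟨((r:ℤ)+1)^2 * (r - 1) - m, ?_⟩
    linear_combination h'
  have hr' : (2:ℤ) ≤ r := by exact_mod_cast hr
  have hle := Int.le_of_dvd (by
    have : (0:ℤ) < r - 1 := by linarith
    positivity) hd
  exact_mod_cast hle

lemma linalg_part {V : Type*} [Fintype V] [DecidableEq V] (A B J : Matrix V V ℝ)
    (r : ℕ) (hr : 2 ≤ r) (k : ℕ) (n δ γ : ℝ) (hn : 0 ≤ n)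
    (hAB : A * B = J - B) (hBA : B * A = J - B) (hBB : B * B = (r:ℝ) • B)
    (hJB : J * B = (r:ℝ) • J) (hJJ : J * J = n • J)
    (hAA : A * A = (k:ℝ) • (1 : Matrix V V ℝ) + δ • A + γ • (J - B))
    (htA : A.trace = 0) (htB : B.trace = n) (htJ : J.trace = n) (htI : (1 : Matrix V V ℝ).trace = n)
    (hnk : n = r * (k + 1))
    (hmem : (-(r : ℝ) - 1) ∈ spectrum ℝ A) :
    ∃ m : ℕ, (m:ℝ) * (k + ((r:ℝ)+1)^2) = ((r:ℝ)+1)^2 * (r - 1) * (k + 1) := by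
  have hr0 : (0:ℝ) < r := by exact_mod_cast (by omega : 0 < r)
  obtain ⟨M, hM⟩ : ∃ M : Matrix V V ℝ, M = (r:ℝ) • (1 : Matrix V V ℝ) - B := ⟨_, rfl⟩
  have hMM : M * M = (r:ℝ) • M := by
    subst hM
    simp only [sub_mul, mul_sub, hBB, smul_mul_assoc, mul_smul_comm, one_mul, mul_one]
    module
  have hAM : A * M = M * A := by
    subst hM
    simp only [sub_mul, mul_sub, hAB, hBA, smul_mul_assoc, mul_smul_comm, one_mul, mul_one]
  have hJM : (J - B) * M = 0 := by
    subst hM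
    simp only [sub_mul, mul_sub, hBB, hJB, smul_mul_assoc, mul_smul_comm, one_mul, mul_one]
    module
  have hAAM : A * (A * M) = (k:ℝ) • M + δ • (A * M) := by
    rw [← mul_assoc, hAA, add_mul, add_mul, smul_mul_assoc γ, hJM]
    simp
  have hroot : ((r:ℝ)+1)^2 + δ * (r+1) - k = 0 := by
    rw [spectrum.mem_iff, Matrix.isUnit_iff_isUnit_det, isUnit_iff_ne_zero, not_not,
      ← Matrix.exists_mulVec_eq_zero_iff] at hmem
    obtain ⟨v, hv, hv0⟩ := hmem
    have hAv : A *ᵥ v = (-(r:ℝ)-1) • v := by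
      rw [Matrix.sub_mulVec, sub_eq_zero, Algebra.algebraMap_eq_smul_one, Matrix.smul_mulVec,
        Matrix.one_mulVec] at hv0
      exact hv0.symm
    by_cases hMv : M *ᵥ v = 0
    · exfalso
      have hBv : B *ᵥ v = (r:ℝ) • v := by
        rw [hM, Matrix.sub_mulVec, Matrix.smul_mulVec, Matrix.one_mulVec, sub_eq_zero] at hMv
        exact hMv.symm
      have h1 : A *ᵥ (B *ᵥ v) = J *ᵥ v - B *ᵥ v := by
        rw [Matrix.mulVec_mulVec, hAB, Matrix.sub_mulVec]
      rw [hBv, Matrix.mulVec_smul, hAv] at h1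
      have h2 : J *ᵥ v = (-(r:ℝ)^2) • v := by
        have : J *ᵥ v = (r:ℝ) • (-(r:ℝ)-1) • v + (r:ℝ) • v := by rw [h1]; simp
        rw [this]; module
      have h3 : J *ᵥ (J *ᵥ v) = n • (J *ᵥ v) := by
        rw [Matrix.mulVec_mulVec, hJJ, Matrix.smul_mulVec]
      rw [h2, Matrix.mulVec_smul, h2, smul_smul, smul_smul, ← sub_eq_zero, ← sub_smul] at h3
      rcases smul_eq_zero.1 h3 with h | h
      · have : 0 < (r:ℝ)^2 := by positivity
        nlinarith [mul_nonneg hn this.le]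
      · exact hv h
    · have h1 : A *ᵥ (M *ᵥ v) = (-(r:ℝ)-1) • (M *ᵥ v) := by
        rw [Matrix.mulVec_mulVec, hAM, ← Matrix.mulVec_mulVec, hAv, Matrix.mulVec_smul]
      have h2 : A *ᵥ (A *ᵥ (M *ᵥ v)) = (k:ℝ) • (M *ᵥ v) + δ • (A *ᵥ (M *ᵥ v)) := by
        have := congrArg (fun X => X *ᵥ v) hAAM
        simpa [Matrix.add_mulVec, Matrix.smul_mulVec, ← Matrix.mulVec_mulVec] using this
      rw [h1, Matrix.mulVec_smul, h1] at h2
      have h3 : (((r:ℝ)+1)^2 + δ * (r+1) - k) • (M *ᵥ v) = 0 := by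
        rw [← sub_eq_zero] at h2
        rw [← h2]; module
      exact (smul_eq_zero.1 h3).resolve_right hMv
  have hT : (0:ℝ) < k + ((r:ℝ)+1)^2 := by positivity
  have hs : (0:ℝ) < (r:ℝ)+1 := by positivity
  obtain ⟨N, hN⟩ : ∃ N : Matrix V V ℝ, N = A * M + ((r:ℝ)+1) • M := ⟨_, rfl⟩
  have hNN : N * N = ((r:ℝ) * ((k + ((r:ℝ)+1)^2) / (r+1))) • N := by
    have e1 : A * M * (A * M) = (r:ℝ) • ((k:ℝ) • M + δ • (A * M)) := by
      rw [← hAAM]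
      calc A * M * (A * M) = A * (M * A) * M := by simp only [mul_assoc]
        _ = A * (A * (M * M)) := by rw [← hAM]; simp only [mul_assoc]
        _ = _ := by rw [hMM]; simp only [mul_smul_comm]
    have e2 : A * M * M = (r:ℝ) • (A * M) := by rw [mul_assoc, hMM, mul_smul_comm]
    have e3 : M * (A * M) = (r:ℝ) • (A * M) := by
      rw [← mul_assoc, ← hAM, e2]
    have hδ : δ = (k + ((r:ℝ)+1)^2) / (r+1) - 2 * (r+1) := by
      field_simp
      linear_combination hroot
    have hk : (k:ℝ) = (k + ((r:ℝ)+1)^2) / (r+1) * (r+1) - (r+1)^2 := by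
      field_simp
      ring
    rw [hN]
    simp only [add_mul, mul_add, smul_mul_assoc, mul_smul_comm, e1, e2, e3, hMM]
    generalize ((k:ℝ) + ((r:ℝ)+1)^2) / (r+1) = t at *
    rw [hk, hδ]
    module
  have htN : N.trace = (r+1) * (r - 1) * n := by
    have e : A * M = (r:ℝ) • A - (J - B) := by
      rw [hM, mul_sub, hAB, mul_smul_comm, mul_one]
    rw [hN, e, hM]
    simp only [Matrix.trace_add, Matrix.trace_sub, Matrix.trace_smul, htA, htB, htJ, htI, smul_eq_mul]
    ring
  obtain ⟨m, hm⟩ := trace_idem_nat (((r:ℝ) * ((k + ((r:ℝ)+1)^2) / (r+1)))⁻¹ • N) (by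
    rw [smul_mul_assoc, mul_smul_comm, hNN, smul_smul, smul_smul, mul_assoc,
      inv_mul_cancel₀ (by positivity), mul_one])
  refine ⟨m, ?_⟩
  rw [← hm, Matrix.trace_smul, htN, hnk, smul_eq_mul]
  field_simp

lemma graph_part {V : Type*} [Fintype V] [DecidableEq V] (G : SimpleGraph V) (b c : ℕ → ℕ)
    (r : ℕ) (hG : IsDRG G 3 b c) (hcov : IsAntipodalCover G 3 r) (B J : Matrix V V ℝ)
    (hB : B = Matrix.of fun x y => if (y = x ∨ G.dist x y = 3) then (1:ℝ) else 0)
    (hJ : J = Matrix.of fun _ _ => 1) :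
    distM G 1 * B = J - B ∧ B * B = (r:ℝ) • B ∧ J * B = (r:ℝ) • J ∧
    (∃ δ γ : ℝ, distM G 1 * distM G 1 = ((b 0 : ℕ):ℝ) • (1 : Matrix V V ℝ) + δ • distM G 1
      + γ • (J - B)) ∧ J * distM G 1 = ((b 0 : ℕ):ℝ) • J := by
  classical
  obtain ⟨hc, hD, ⟨p, q, hpq⟩, hc1, hreg⟩ := hG
  obtain ⟨hanti, hcard⟩ := hcov
  have h01 : ∀ x y, G.dist x y = 0 ↔ x = y := fun x y => hc.dist_eq_zero_iff
  have tri : ∀ x y z, G.dist x z ≤ G.dist x y + G.dist y z := fun x y z => hc.dist_triangle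
  have sym : ∀ x y, G.dist x y = G.dist y x := fun x y => SimpleGraph.dist_comm
  have adj : ∀ x y, G.Adj x y ↔ G.dist x y = 1 := fun x y => SimpleGraph.dist_eq_one_iff_adj.symm
  have hb2 : ∀ x y, G.dist x y = 2 → ∃ z, G.dist y z = 1 ∧ G.dist x z = 3 := by
    have hpos : 0 < b 2 := by
      obtain ⟨w, hw⟩ := hc.exists_walk_length_eq_dist q p
      cases w with
      | nil => simp at hpq
      | @cons _ u _ h w' =>
        have h1 := SimpleGraph.dist_le w'
        rw [SimpleGraph.Walk.length_cons, sym q p, hpq] at hw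
        have h2 := tri q u p
        have h3 := (adj _ _).1 h
        have h4 := sym q p
        have h5 : G.dist p u = 2 := by rw [sym p u]; omega
        rw [← (hreg 2 (by norm_num) p u h5).2, Set.ncard_pos]
        exact ⟨q, h.symm, hpq⟩
    intro x y hxy
    rw [← (hreg 2 (by norm_num) x y hxy).2, Set.ncard_pos] at hpos
    obtain ⟨z, hz1, hz2⟩ := hpos
    exact ⟨z, (adj _ _).1 hz1, hz2⟩
  have hBB0 : ∀ x y, (y = x ∨ G.dist x y = 3) → ∀ z,
      ((z = x ∨ G.dist x z = 3) ∧ (y = z ∨ G.dist z y = 3) ↔ (z = x ∨ G.dist x z = 3)) := by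
    intro x y hxy z
    refine ⟨fun h => h.1, fun h => ⟨h, ?_⟩⟩
    have := hanti x z y
    have := h01 x y
    grind
  have hdeg : ∀ y, (({z | G.dist y z = 1} : Set V).ncard) = b 0 := by
    intro y
    have := (hreg 0 (by norm_num) y y (by simp)).2
    rw [← this]; congr 1; ext z
    simp only [Set.mem_ofPred_eq, adj, zero_add, and_self]
  refine ⟨?_, ?_, ?_, ?_, ?_⟩
  · ext x y
    simp only [hB, hJ, distM, Matrix.mul_apply, Matrix.of_apply, Matrix.sub_apply,
      ite_mul, one_mul, zero_mul, ← ite_and]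
    rw [sum_ind_ncard]
    by_cases hxy : y = x ∨ G.dist x y = 3
    · rw [if_pos hxy, sub_self, Nat.cast_eq_zero, Set.ncard_eq_zero, Set.eq_empty_iff_forall_notMem]
      rintro z ⟨hz1, hz2⟩
      have := hanti y x z
      have := sym x y
      have := sym z y
      have := sym x z
      have := h01 x y
      have := h01 x z
      grind
    · rw [if_neg hxy, sub_zero, Nat.cast_eq_one, Set.ncard_eq_one]
      push Not at hxy
      have h3 := hD x y
      have h0 := h01 x y
      have h12 : G.dist x y = 1 ∨ G.dist x y = 2 := by
        have : G.dist x y ≠ 0 := fun h => hxy.1 (h0.1 h).symm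
        omega
      rcases h12 with h1 | h2
      · refine ⟨y, ?_⟩
        ext z
        simp only [Set.mem_ofPred_eq, Set.mem_singleton_iff]
        have := tri z x y
        have := sym z x
        grind
      · obtain ⟨z, hz1, hz2⟩ := hb2 y x (by rw [sym, h2])
        refine ⟨z, ?_⟩
        ext w
        simp only [Set.mem_ofPred_eq, Set.mem_singleton_iff]
        have := hanti y w z
        have := tri w x z
        have := sym w x
        have := sym w y
        have := sym z y
        grind
  · ext x y
    simp only [hB, Matrix.mul_apply, Matrix.of_apply, Matrix.smul_apply,
      ite_mul, one_mul, zero_mul, ← ite_and]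
    rw [sum_ind_ncard]
    by_cases hxy : y = x ∨ G.dist x y = 3
    · rw [if_pos hxy, smul_eq_mul, mul_one, Nat.cast_inj, ← hcard x]
      congr 1; ext z
      exact hBB0 x y hxy z
    · rw [if_neg hxy, smul_zero, Nat.cast_eq_zero, Set.ncard_eq_zero,
        Set.eq_empty_iff_forall_notMem]
      rintro z ⟨hz1, hz2⟩
      have := hanti z x y
      have := sym x z
      grind
  · ext x y
    simp only [hB, hJ, Matrix.mul_apply, Matrix.of_apply, Matrix.smul_apply, one_mul]
    rw [sum_ind_ncard, smul_eq_mul, mul_one, Nat.cast_inj, ← hcard y]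
    congr 1; ext z
    have := sym z y
    grind
  · refine ⟨(b 0 : ℝ) - 1 - b 1 - c 2, c 2, ?_⟩
    ext x y
    simp only [hB, hJ, distM, Matrix.mul_apply, Matrix.of_apply, Matrix.sub_apply, Matrix.add_apply,
      Matrix.smul_apply, Matrix.one_apply, ite_mul, one_mul, zero_mul, ← ite_and, smul_eq_mul]
    have h3 := hD x y
    have h0 := h01 x y
    obtain h | h | h | h : G.dist x y = 0 ∨ G.dist x y = 1 ∨ G.dist x y = 2 ∨ G.dist x y = 3 := by
      omega
    · obtain rfl := h0.1 h
      have := hdeg x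
      rw [sum_ind_ncard]
      have e : {z | G.dist x z = 1 ∧ G.dist z x = 1} = {z | G.dist x z = 1} := by
        ext z; simp only [Set.mem_ofPred_eq, sym z x, and_self]
      rw [e, this]; simp
    · have hne : x ≠ y := fun e => by rw [h0.2 e] at h; omega
      have hne' := hne.symm
      have hr1 := hreg 1 (by norm_num) x y h
      rw [hc1, ← Nat.cast_inj (R := ℝ), ← sum_ind_ncard, ← Nat.cast_inj (R := ℝ),
        ← sum_ind_ncard] at hr1
      have hy := hdeg y
      rw [← Nat.cast_inj (R := ℝ), ← sum_ind_ncard] at hy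
      simp only [h, hne, hne', if_true, if_false, false_or]
      have key : (∑ z, (if G.dist y z = 1 then (1:ℝ) else 0)) =
          (∑ z, (if G.Adj y z ∧ G.dist x z = 1 - 1 then (1:ℝ) else 0)) +
          (∑ z, (if G.dist x z = 1 ∧ G.dist z y = 1 then (1:ℝ) else 0)) +
          (∑ z, (if G.Adj y z ∧ G.dist x z = 1 + 1 then (1:ℝ) else 0)) := by
        rw [← Finset.sum_add_distrib, ← Finset.sum_add_distrib]
        refine Finset.sum_congr rfl fun z _ => ?_
        simp only [adj, sym z y]
        by_cases hz : G.dist y z = 1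
        · have := tri x y z
          obtain h | h | h : G.dist x z = 0 ∨ G.dist x z = 1 ∨ G.dist x z = 2 := by omega
          all_goals simp [h, hz]
        · simp [hz]
      rw [hy, hr1.1, hr1.2] at key
      push_cast at key
      norm_num only [Nat.one_ne_zero, if_false, if_true]
      linarith
    · have hne : x ≠ y := fun e => by rw [h0.2 e] at h; omega
      have hne' := hne.symm
      rw [sum_ind_ncard]
      have e : {z | G.dist x z = 1 ∧ G.dist z y = 1} = {z | G.Adj y z ∧ G.dist x z = 2 - 1} := by
        ext z; simp only [Set.mem_ofPred_eq, adj, sym z y]; exact and_comm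
      rw [e, (hreg 2 (by norm_num) x y h).1]
      simp [h, hne, hne']
    · have hne : x ≠ y := fun e => by rw [h0.2 e] at h; omega
      have hne' := hne.symm
      rw [sum_ind_ncard]
      have e : {z | G.dist x z = 1 ∧ G.dist z y = 1} = ∅ := by
        rw [Set.eq_empty_iff_forall_notMem]
        rintro z ⟨h1, h2⟩
        have := tri x z y
        omega
      rw [e]
      simp [h, hne, hne']
  · ext x y
    simp only [hJ, distM, Matrix.mul_apply, Matrix.of_apply, Matrix.smul_apply, one_mul]
    rw [sum_ind_ncard, smul_eq_mul, mul_one, Nat.cast_inj, ← hdeg y]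
    congr 1; ext z
    simp only [Set.mem_ofPred_eq, sym z y]

/-- Proposition 3.13: for a fixed integer `r ≥ 2`, an antipodal
`r`-cover distance-regular graph of diameter 3 on `n` vertices whose smallest adjacency
eigenvalue is `−r − 1` satisfies `n ≤ r⁶ + 3r⁵ + r⁴ − 4r³ − 4r²` (hence there are only
finitely many such graphs). -/
theorem stmt17 (G : SimpleGraph V) (b c : ℕ → ℕ) (r : ℕ) (hr : 2 ≤ r)
    (hG : IsDRG G 3 b c) (hcov : IsAntipodalCover G 3 r)
    (hmem : (-(r : ℝ) - 1) ∈ spectrum ℝ (distM G 1))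
    (hmin : ∀ μ ∈ spectrum ℝ (distM G 1), -(r : ℝ) - 1 ≤ μ) :
    (Fintype.card V : ℝ) ≤
      (r : ℝ) ^ 6 + 3 * (r : ℝ) ^ 5 + (r : ℝ) ^ 4 - 4 * (r : ℝ) ^ 3 - 4 * (r : ℝ) ^ 2 := by
  obtain ⟨B, hB⟩ : ∃ B : Matrix V V ℝ,
    B = Matrix.of fun x y => if (y = x ∨ G.dist x y = 3) then (1:ℝ) else 0 := ⟨_, rfl⟩
  obtain ⟨J, hJ⟩ : ∃ J : Matrix V V ℝ, J = Matrix.of fun _ _ => 1 := ⟨_, rfl⟩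
  obtain ⟨hAB, hBB, hJB, ⟨δ, γ, hAA⟩, hJA⟩ := graph_part G b c r hG hcov B J hB hJ
  have hJJ : J * J = (Fintype.card V : ℝ) • J := by
    ext x y
    simp [hJ, Matrix.mul_apply]
  have hAt : (distM G 1)ᵀ = distM G 1 := by
    ext x y
    simp only [distM, Matrix.transpose_apply, Matrix.of_apply]
    rw [SimpleGraph.dist_comm]
  have hBt : Bᵀ = B := by
    ext x y
    simp only [hB, Matrix.transpose_apply, Matrix.of_apply]
    rw [SimpleGraph.dist_comm]
    simp only [eq_comm]
  have hJt : Jᵀ = J := by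
    ext x y
    simp [hJ]
  have hBA : B * distM G 1 = J - B := by
    have := congrArg Matrix.transpose hAB
    rwa [Matrix.transpose_mul, Matrix.transpose_sub, hAt, hBt, hJt] at this
  have hnk : (Fintype.card V : ℝ) = r * ((b 0 : ℕ) + 1) := by
    have h1 : J * (distM G 1 * B) = J * (J - B) := by rw [hAB]
    rw [← mul_assoc, hJA, mul_sub, smul_mul_assoc, hJB, hJJ] at h1
    obtain ⟨x⟩ := hG.1.nonempty
    have h2 := congrFun (congrFun h1 x) x
    simp only [hJ, Matrix.smul_apply, Matrix.sub_apply, Matrix.of_apply, smul_eq_mul] at h2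
    linarith
  obtain ⟨m, hm⟩ := linalg_part (distM G 1) B J r hr (b 0) (Fintype.card V) δ γ (by positivity)
    hAB hBA hBB hJB hJJ hAA (by simp [distM, Matrix.trace]) (by simp [hB, Matrix.trace])
    (by simp [hJ, Matrix.trace]) (by simp) hnk hmem
  have hfin := arith_part r (b 0) m hr hm
  have hr0 : (0:ℝ) ≤ r := by positivity
  rw [hnk]
  have := mul_le_mul_of_nonneg_left hfin hr0
  linarith
end

section
/- Let G be an antipodal distance-regular graph of diameter D which is an antipodal 2-cover. Then 0 is an eigenvalue of the distance matrix 𝔻₁ of G with multiplicity at least ⌊D/2⌋, and consequently 𝔻₁ has at most ⌈D/2⌉ + 2 distinct eigenvalues. -/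
open Matrix

variable {V : Type*} [Fintype V] [DecidableEq V]

/-- Matrix whose entries are a function of the distance. -/
noncomputable def fMat (G : SimpleGraph V) (f : ℕ → ℝ) : Matrix V V ℝ :=
  Matrix.of fun x y => f (G.dist x y)

omit [Fintype V] [DecidableEq V] in
lemma exists_nb_pred (G : SimpleGraph V) (hc : G.Connected) (x y : V) (i : ℕ)
    (h : G.dist x y = i + 1) : ∃ z, G.Adj y z ∧ G.dist x z = i := by
  obtain ⟨p, hp⟩ := hc.exists_walk_length_eq_dist y x
  rw [SimpleGraph.dist_comm, h] at hp
  cases p with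
  | nil => simp at hp
  | cons ha q =>
    rename_i z
    refine ⟨z, ha, ?_⟩
    simp at hp
    have h1 := SimpleGraph.dist_le q
    have h2 := hc.dist_triangle (u := x) (v := z) (w := y)
    have h3 : G.dist z y ≤ 1 := by
      rw [SimpleGraph.dist_eq_one_iff_adj.mpr ha.symm]
    rw [SimpleGraph.dist_comm] at h1
    omega

section
variable (G : SimpleGraph V) (D : ℕ) (b c : ℕ → ℕ) (hG : IsDRG G D b c)
include hG

omit [Fintype V] [DecidableEq V] in
lemma drg_exists (i : ℕ) (hi : i ≤ D) : ∃ u : V, (∃ v, G.dist u v = D) ∧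
    ∀ j, i ≤ j → j ≤ D → ∃ y, G.dist u y = j := by
  obtain ⟨hc, hle, ⟨u, v, huv⟩, -, -⟩ := hG
  refine ⟨u, ⟨v, huv⟩, ?_⟩
  have key : ∀ t ≤ D, ∃ y, G.dist u y = D - t := by
    intro t
    induction t with
    | zero => intro _; exact ⟨v, by simpa using huv⟩
    | succ t ih =>
      intro ht
      obtain ⟨y, hy⟩ := ih (by omega)
      obtain ⟨z, -, hz⟩ := exists_nb_pred G hc u y (D - (t+1)) (by omega)
      exact ⟨z, hz⟩
  intro j _ hj
  obtain ⟨y, hy⟩ := key (D - j) (by omega)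
  exact ⟨y, by omega⟩

omit [DecidableEq V] in
lemma drg_pos (i : ℕ) (hi : i < D) : 0 < b i ∧ 0 < c (i+1) := by
  obtain ⟨u, -, hu⟩ := drg_exists G D b c hG 0 (by omega)
  obtain ⟨hc, hle, -, -, h⟩ := hG
  obtain ⟨y, hy⟩ := hu (i+1) (by omega) (by omega)
  obtain ⟨z, hz, hz'⟩ := exists_nb_pred G hc u y i hy
  constructor
  · rw [← (h i hi.le u z hz').2, Set.ncard_pos]
    exact ⟨y, hz.symm, hy⟩
  · rw [← (h (i+1) hi u y hy).1, Set.ncard_pos]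
    exact ⟨z, hz, by simpa using hz'⟩

/-- step lemma -/
lemma fMat_mul_A (f : ℕ → ℝ) : fMat G f * distM G 1 =
    fMat G (fun i => c i * f (i-1) + (b 0 - b i - c i) * f i + b i * f (i+1)) := by
  classical
  obtain ⟨hc, hle, -, -, h⟩ := hG
  ext x y
  simp only [Matrix.mul_apply, fMat, distM, Matrix.of_apply, mul_ite, mul_one, mul_zero]
  rw [← Finset.sum_filter]
  set i := G.dist x y with hi
  have hN : (Finset.univ.filter fun z => G.dist z y = 1) =
      Finset.univ.filter fun z => G.Adj y z := by
    ext z; simp [SimpleGraph.dist_eq_one_iff_adj, SimpleGraph.adj_comm]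
  rw [hN]
  have hk := (h 0 (by omega) y y (by simp)).2
  have hC := (h i (hle x y) x y rfl).1
  have hB := (h i (hle x y) x y rfl).2
  rw [Set.ncard_eq_toFinset_card'] at hk hC hB
  simp only [Set.toFinset_setOf] at hk hC hB
  have hk' : (Finset.univ.filter fun z => G.Adj y z).card = b 0 := by
    rw [← hk]; congr 1; ext z; simp [SimpleGraph.dist_eq_one_iff_adj]
  have hC' : ((Finset.univ.filter fun z => G.Adj y z).filter (fun z => G.dist x z = i - 1)).card
      = c i := by rw [Finset.filter_filter]; exact hC
  have hB' : ((Finset.univ.filter fun z => G.Adj y z).filter (fun z => G.dist x z = i + 1)).card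
      = b i := by rw [Finset.filter_filter]; exact hB
  have hcase : ∀ z, G.Adj y z → f (G.dist x z) = f i +
      ((if G.dist x z = i - 1 then f (i-1) - f i else 0) +
      (if G.dist x z = i + 1 then f (i+1) - f i else 0)) := by
    intro z hz
    have h1 := SimpleGraph.dist_eq_one_iff_adj.mpr hz
    have h2 := hc.dist_triangle (u := x) (v := y) (w := z)
    have h3 := hc.dist_triangle (u := x) (v := z) (w := y)
    rw [SimpleGraph.dist_comm (u := z)] at h3
    have h4 : G.dist x z = i - 1 ∨ G.dist x z = i ∨ G.dist x z = i + 1 := by omega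
    rcases h4 with h4 | h4 | h4
    · rw [if_pos h4, if_neg (by omega), h4]; ring
    · rw [h4]
      by_cases h0 : i = i - 1
      · rw [if_pos h0, if_neg (by omega), ← h0]; ring
      · rw [if_neg h0, if_neg (by omega)]; ring
    · rw [if_neg (by omega), if_pos h4, h4]; ring
  rw [Finset.sum_congr rfl (fun z hz => hcase z (Finset.mem_filter.mp hz).2)]
  rw [Finset.sum_add_distrib, Finset.sum_add_distrib, ← Finset.sum_filter, ← Finset.sum_filter]
  simp only [Finset.sum_const, nsmul_eq_mul, hk', hC', hB']
  ring

lemma fMat_mul_distM (i : ℕ) : ∀ f : ℕ → ℝ, ∃ g, fMat G f * distM G i = fMat G g := by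
  have hd : ∀ i, distM G i = fMat G (fun j => if j = i then 1 else 0) := fun i => rfl
  have hadd : ∀ f g, fMat G (f + g) = fMat G f + fMat G g := fun f g => rfl
  have hsm : ∀ (r : ℝ) f, fMat G (r • f) = r • fMat G f := fun r f => rfl
  induction i using Nat.strong_induction_on with
  | _ i ih =>
    intro f
    rcases i with _ | i
    · refine ⟨f, ?_⟩
      have : distM G 0 = 1 := by
        ext x y
        simp [distM, Matrix.one_apply, hG.1.dist_eq_zero_iff]
      rw [this, mul_one]
    · by_cases hi : i + 1 ≤ D
      · have hcp : (c (i+1) : ℝ) ≠ 0 := by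
          have := (drg_pos G D b c hG i (by omega)).2
          positivity
        -- A_i A = b_{i-1} A_{i-1} + a_i A_i + c_{i+1} A_{i+1}
        have hrec : distM G i * distM G 1 = (if 0 < i then (b (i-1) : ℝ) else 0) • distM G (i-1)
            + (b 0 - b i - c i + if i = 0 then (c 0 : ℝ) else 0 : ℝ) • distM G i
            + (c (i+1) : ℝ) • distM G (i+1) := by
          rw [hd i, fMat_mul_A G D b c hG]
          ext x y
          simp only [fMat, distM, Matrix.of_apply, Matrix.add_apply, Matrix.smul_apply,
            smul_eq_mul]
          generalize G.dist x y = j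
          rcases i with _ | i
          · rcases j with _ | _ | j <;> simp
          · simp only [Nat.add_sub_cancel]
            by_cases h1 : j = i
            · subst h1; simp
              rcases j with _ | j
              · simp
              · simp
            by_cases h2 : j = i + 1
            · subst h2; simp
            by_cases h3 : j = i + 2
            · subst h3; simp
            have : j - 1 ≠ i + 1 := by omega
            simp [h1, h2, h3, this]
        have hs : distM G (i+1) = (c (i+1) : ℝ)⁻¹ • (distM G i * distM G 1
            - (if 0 < i then (b (i-1) : ℝ) else 0) • distM G (i-1)
            - (b 0 - b i - c i + if i = 0 then (c 0 : ℝ) else 0 : ℝ) • distM G i) := by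
          rw [hrec, add_assoc, add_sub_cancel_left, add_sub_cancel_left, smul_smul,
            inv_mul_cancel₀ hcp, one_smul]
        obtain ⟨g1, hg1⟩ := ih i (by omega) f
        obtain ⟨g2, hg2⟩ := ih (i-1) (by omega) f
        rw [hs, Matrix.mul_smul, Matrix.mul_sub, Matrix.mul_sub, Matrix.mul_smul, Matrix.mul_smul,
          ← Matrix.mul_assoc, hg1, hg2, fMat_mul_A G D b c hG]
        generalize (fun i => (c i : ℝ) * g1 (i-1) + (b 0 - b i - c i) * g1 i + b i * g1 (i+1)) = g3
        generalize (if 0 < i then (b (i-1) : ℝ) else 0) = r1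
        generalize (b 0 - b i - c i + if i = 0 then (c 0 : ℝ) else 0 : ℝ) = r2
        exact ⟨(c (i+1) : ℝ)⁻¹ • (g3 - r1 • g2 - r2 • g1), rfl⟩
      · refine ⟨0, ?_⟩
        have : distM G (i+1) = 0 := by
          ext x y
          have := hG.2.1 x y
          simp [distM]; omega
        rw [this, mul_zero]; rfl

lemma qDist_eq_s18 : qDist G D 1 = fMat G (fun i => (i : ℝ)) := by
  ext x y
  have := hG.2.1 x y
  simp only [qDist, fMat, distM, Matrix.sum_apply, Matrix.smul_apply, Matrix.of_apply]
  simp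
  intro h0
  by_contra h1; have h2 : G.dist x y ≠ 0 := fun h => h1 (by simp [h]); have := h0 (by first | omega | exact h2); omega

lemma qDist_pow (j : ℕ) : ∃ g, (qDist G D 1) ^ j = fMat G g := by
  induction j with
  | zero =>
    refine ⟨fun j => if j = 0 then 1 else 0, ?_⟩
    ext x y
    simp [fMat, Matrix.one_apply, hG.1.dist_eq_zero_iff]
  | succ j ih =>
    obtain ⟨g, hg⟩ := ih
    choose F hF using fun i => fMat_mul_distM G D b c hG i g
    refine ⟨∑ i ∈ Finset.Icc 1 D, (∑ j ∈ Finset.range i, (1 / (1:ℝ)) ^ j) • F i, ?_⟩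
    rw [pow_succ, hg, qDist, Finset.mul_sum]
    simp only [Matrix.mul_smul, hF]
    ext x y
    simp [fMat, Matrix.sum_apply, Finset.sum_apply]

omit [DecidableEq V] in
lemma exists_antipode (hcov : IsAntipodalCover G D 2) :
    0 < D ∧ ∃ σ : V → V, (∀ x, σ (σ x) = x) ∧ ∀ x y, G.dist x (σ y) = D - G.dist x y := by
  have hpos : 0 < D := by
    rcases Nat.eq_zero_or_pos D with h | h
    · exfalso
      obtain ⟨x, -⟩ := hG.2.2.1
      have h2 := hcov.2 x
      have : ({y : V | y = x ∨ G.dist x y = D} : Set V) = {x} := by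
        ext y
        simp [h, hG.1.dist_eq_zero_iff, eq_comm]
      rw [this] at h2
      simp at h2
    · exact h
  refine ⟨hpos, ?_⟩
  have hex : ∀ x : V, ∃ z, ∀ y, G.dist x y = D ↔ y = z := by
    intro x
    have h2 := hcov.2 x
    have h3 : ({y : V | y = x ∨ G.dist x y = D} : Set V) = insert x {y | G.dist x y = D} := by
      ext y; simp
    rw [h3, Set.ncard_insert_of_notMem (by simp; omega)] at h2
    obtain ⟨z, hz⟩ := Set.ncard_eq_one.mp (by omega : ({y | G.dist x y = D} : Set V).ncard = 1)
    refine ⟨z, fun y => ?_⟩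
    have := Set.ext_iff.mp hz y
    simpa using this
  choose σ hσ using hex
  have hσσ : ∀ x, σ (σ x) = x := by
    intro x
    symm
    rw [← hσ, SimpleGraph.dist_comm, hσ]
  refine ⟨σ, hσσ, ?_⟩
  have key : ∀ t, ∀ x y, G.dist x y + t = D → G.dist y (σ x) ≤ t := by
    intro t
    induction t with
    | zero => intro x y h; rw [(hσ x y).mp (by omega)]; simp
    | succ t ih =>
      intro x y h
      have hb := (drg_pos G D b c hG (G.dist x y) (by omega)).1
      rw [← (hG.2.2.2.2 _ (by omega) x y rfl).2, Set.ncard_pos] at hb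
      obtain ⟨z, hz, hz'⟩ := hb
      have h1 := ih x z (by omega)
      have h2 := hG.1.dist_triangle (u := y) (v := z) (w := σ x)
      rw [SimpleGraph.dist_eq_one_iff_adj.mpr hz] at h2
      omega
  intro x y
  have h1 := key (D - G.dist y x) y x (by have := hG.2.1 y x; omega)
  have h2 := hG.1.dist_triangle (u := y) (v := x) (w := σ y)
  rw [(hσ y (σ y)).mpr rfl] at h2
  rw [SimpleGraph.dist_comm (u := x) (v := y)]
  omega

end

theorem stmt18 (G : SimpleGraph V) (D : ℕ) (b c : ℕ → ℕ)
    (hG : IsDRG G D b c) (hcov : IsAntipodalCover G D 2) :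
    D / 2 ≤ Module.finrank ℝ (LinearMap.ker (Matrix.mulVecLin (qDist G D 1))) ∧
    (spectrum ℝ (qDist G D 1)).ncard ≤ (D + 1) / 2 + 2 := by
  classical
  obtain ⟨hpos, σ, hσσ, hσ⟩ := exists_antipode G D b c hG hcov
  have hinv : Function.Involutive σ := hσσ
  have hM := qDist_eq_s18 G D b c hG
  have hle := hG.2.1
  have hσ' : ∀ x y, G.dist (σ x) y = D - G.dist x y := by
    intro x y
    rw [SimpleGraph.dist_comm, hσ, SimpleGraph.dist_comm]
  have hre : ∀ F : V → ℝ, ∑ y, F (σ y) = ∑ y, F y := fun F =>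
    Equiv.sum_comp (hinv.toPerm) F
  have hmv : ∀ (f : ℕ → ℝ) (v : V → ℝ) x, (fMat G f *ᵥ v) x = ∑ y, f (G.dist x y) * v y :=
    fun f v x => rfl
  -- symmetric vectors
  have hsym : ∀ v : V → ℝ, (∀ x, v (σ x) = v x) → ∀ x,
      2 * (qDist G D 1 *ᵥ v) x = D * ∑ y, v y := by
    intro v hv x
    have h1 : (qDist G D 1 *ᵥ v) x = ∑ y, (G.dist x y : ℝ) * v y := by rw [hM, hmv]
    have h2 : (qDist G D 1 *ᵥ v) x = ∑ y, ((D : ℝ) - G.dist x y) * v y := by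
      rw [h1, ← hre]
      refine Finset.sum_congr rfl fun y _ => ?_
      rw [hv, hσ, Nat.cast_sub (hle x y)]
    rw [two_mul]
    nth_rewrite 1 [h1]
    rw [h2, ← Finset.sum_add_distrib, Finset.mul_sum]
    refine Finset.sum_congr rfl fun y _ => ?_
    ring
  constructor
  · obtain ⟨u, -, hu⟩ := drg_exists G D b c hG 0 (by omega)
    let φ : (Fin (D/2+1) → ℝ) →ₗ[ℝ] (V → ℝ) :=
      { toFun := fun h y => h ⟨min (G.dist u y) (D - G.dist u y), by omega⟩
        map_add' := fun _ _ => rfl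
        map_smul' := fun _ _ => rfl }
    have hφ : ∀ h y, φ h y = h ⟨min (G.dist u y) (D - G.dist u y), by omega⟩ := fun _ _ => rfl
    have hinj : Function.Injective φ := by
      intro h h' hh
      funext i
      obtain ⟨y, hy⟩ := hu i (by omega) (by omega)
      have := congrFun hh y
      rw [hφ, hφ] at this
      have hi : (⟨min (G.dist u y) (D - G.dist u y), by omega⟩ : Fin (D/2+1)) = i := by
        ext; simp only [hy]; omega
      rwa [hi] at this
    let s : (V → ℝ) →ₗ[ℝ] ℝ := ∑ y, LinearMap.proj y
    have hs : ∀ v, s v = ∑ y, v y := fun v => by simp [s]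
    have hrk := LinearMap.finrank_range_add_finrank_ker (s ∘ₗ φ)
    have hr1 : Module.finrank ℝ (LinearMap.range (s ∘ₗ φ)) ≤ 1 := by
      have := Submodule.finrank_le (LinearMap.range (s ∘ₗ φ))
      simpa using this
    rw [Module.finrank_fintype_fun_eq_card, Fintype.card_fin] at hrk
    have hmap : (LinearMap.ker (s ∘ₗ φ)).map φ ≤ LinearMap.ker (Matrix.mulVecLin (qDist G D 1)) := by
      rintro _ ⟨h, hh, rfl⟩
      have hh' : ∑ y, φ h y = 0 := by
        rw [← hs]; exact hh
      rw [LinearMap.mem_ker, Matrix.mulVecLin_apply]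
      funext x
      have := hsym (φ h) (fun x => by
        rw [hφ, hφ]; congr 1; ext; simp only [hσ]; have := hle u x; omega) x
      rw [hh'] at this
      simp at this
      simpa using this
    have h1 := Submodule.finrank_mono hmap
    have h2 := LinearEquiv.finrank_eq (Submodule.equivMapOfInjective φ hinj (LinearMap.ker (s ∘ₗ φ)))
    omega
  · set m := (D+1)/2 with hm
    choose F hF using qDist_pow G D b c hG
    let g : Fin (m+1) → (Fin m → ℝ) := fun j i => F j i - F j (D - i)
    have hdep : ¬ LinearIndependent ℝ g := by
      intro h
      have := h.fintype_card_le_finrank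
      simp at this
    obtain ⟨a, ha, j0, hj0⟩ := Fintype.not_linearIndependent_iff.mp hdep
    let p : Polynomial ℝ := ∑ j : Fin (m+1), Polynomial.monomial (j : ℕ) (a j)
    have hpc : p.coeff j0 = a j0 := by
      simp only [p, Polynomial.finset_sum_coeff, Polynomial.coeff_monomial]
      rw [Finset.sum_eq_single j0]
      · simp
      · intro j _ hj
        rw [if_neg (fun h => hj (Fin.ext h))]
      · simp
    have hp0 : p ≠ 0 := by
      intro h
      rw [h] at hpc
      simp at hpc
      exact hj0 hpc.symm
    have hpd : p.natDegree ≤ m := by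
      refine Polynomial.natDegree_sum_le_of_forall_le _ _ fun j _ => ?_
      exact (Polynomial.natDegree_monomial_le _).trans (by omega)
    have hpe : ∀ θ, p.eval θ = ∑ j : Fin (m+1), a j * θ ^ (j : ℕ) := by
      intro θ
      simp [p, Polynomial.eval_finset_sum]
    have hsub : spectrum ℝ (qDist G D 1) ⊆
        ((p.roots.toFinset ∪ {0, (D : ℝ) * Fintype.card V / 2} : Finset ℝ) : Set ℝ) := by
      intro θ hθ
      rw [← Matrix.spectrum_toLin', ← Module.End.hasEigenvalue_iff_mem_spectrum] at hθ
      obtain ⟨v, hv⟩ := hθ.exists_hasEigenvector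
      have hv0 := hv.2
      have hve : qDist G D 1 *ᵥ v = θ • v := by
        simpa using hv.apply_eq_smul
      by_cases hvs : ∀ x, v (σ x) = v x
      · have h := hsym v hvs
        rw [hve] at h
        simp only [Pi.smul_apply, smul_eq_mul] at h
        by_cases hθ0 : θ = 0
        · simp [hθ0]
        · have hS : ∑ y, v y ≠ 0 := by
            intro hS
            apply hv0
            funext x
            have := h x
            rw [hS] at this
            simpa [hθ0] using this
          have h2 : ∑ x, 2 * (θ * v x) = ∑ x : V, (D : ℝ) * ∑ y, v y :=
            Finset.sum_congr rfl fun x _ => h x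
          rw [← Finset.mul_sum, ← Finset.mul_sum, Finset.sum_const, Finset.card_univ,
            nsmul_eq_mul] at h2
          have h3 : θ = (D : ℝ) * Fintype.card V / 2 := by
            apply mul_right_cancel₀ hS
            linarith
          simp [← h3]
      · push Not at hvs
        obtain ⟨x0, hx0⟩ := hvs
        let w : V → ℝ := fun x => v x - v (σ x)
        have hwx : w x0 ≠ 0 := sub_ne_zero.mpr (Ne.symm hx0)
        have hwσ : ∀ x, w (σ x) = - w x := by
          intro x; simp only [w, hσσ]; ring
        have hwe : qDist G D 1 *ᵥ w = θ • w := by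
          have h1 : ∀ x, (qDist G D 1 *ᵥ (fun y => v (σ y))) x = θ * v (σ x) := by
            intro x
            have : (qDist G D 1 *ᵥ v) (σ x) = θ * v (σ x) := by rw [hve]; rfl
            rw [← this, hM, hmv, hmv, ← hre]
            refine Finset.sum_congr rfl fun y _ => ?_
            rw [hσσ, hσ, hσ']
          have h2 : w = v - (fun y => v (σ y)) := rfl
          rw [h2, Matrix.mulVec_sub, hve]
          funext x
          simp only [Pi.sub_apply, Pi.smul_apply, h1, smul_eq_mul]
          ring
        have hwp : ∀ j : ℕ, (qDist G D 1) ^ j *ᵥ w = θ ^ j • w := by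
          intro j
          induction j with
          | zero => simp
          | succ j ih =>
            rw [pow_succ, ← Matrix.mulVec_mulVec, hwe, Matrix.mulVec_smul, ih, smul_smul, pow_succ,
              mul_comm]
        -- the combined function
        let f : ℕ → ℝ := fun i => ∑ j : Fin (m+1), a j * F j i
        have hf : ∀ i, i ≤ D → f i = f (D - i) := by
          have hlt : ∀ i, i < m → f i = f (D - i) := by
            intro i hi
            have := congrFun ha ⟨i, hi⟩
            simp only [Finset.sum_apply, Pi.smul_apply, smul_eq_mul, g, Pi.zero_apply, mul_sub,
              Finset.sum_sub_distrib] at this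
            exact sub_eq_zero.mp this
          intro i hi
          by_cases h1 : i < m
          · exact hlt i h1
          by_cases h2 : D - i < m
          · rw [hlt _ h2]; congr 1; omega
          · congr 1; omega
        have hfw : ∑ y, f (G.dist x0 y) * w y = 0 := by
          have h1 : ∑ y, f (G.dist x0 y) * w y = - ∑ y, f (G.dist x0 y) * w y := by
            conv_lhs => rw [← hre]
            rw [← Finset.sum_neg_distrib]
            refine Finset.sum_congr rfl fun y _ => ?_
            rw [hσ, ← hf _ (hle _ _), hwσ]; ring
          linarith
        have hfin : p.eval θ * w x0 = 0 := by
          rw [← hfw, hpe, Finset.sum_mul]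
          simp only [f, Finset.sum_mul]
          rw [Finset.sum_comm]
          refine Finset.sum_congr rfl fun j _ => ?_
          have h1 := congrFun (hwp j) x0
          rw [hF, hmv, Pi.smul_apply, smul_eq_mul] at h1
          rw [mul_assoc, ← h1, Finset.mul_sum]
          exact Finset.sum_congr rfl fun y _ => by ring
        have hr : p.eval θ = 0 := (mul_eq_zero.mp hfin).resolve_right hwx
        simp [hp0, hr]
    calc (spectrum ℝ (qDist G D 1)).ncard
        ≤ (p.roots.toFinset ∪ {0, (D : ℝ) * Fintype.card V / 2} : Finset ℝ).card := by
          rw [← Set.ncard_coe_finset]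
          exact Set.ncard_le_ncard hsub (Finset.finite_toSet _)
      _ ≤ p.roots.toFinset.card + ({0, (D : ℝ) * Fintype.card V / 2} : Finset ℝ).card :=
          Finset.card_union_le _ _
      _ ≤ m + 2 := by
          refine Nat.add_le_add ?_ Finset.card_le_two
          exact (Multiset.toFinset_card_le _).trans ((Polynomial.card_roots' p).trans hpd)
end
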